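/- arXiv:1910.02946 — 5 statements merged into one kernel-verified Lean document; each statement's English description precedes it below -/
import Mathlib

section
/- Fix real numbers a < b. Suppose (T_α)_{α>0} is a family of bounded linear operators on L¹[a,b] such that: (1) T_1 is the integration operator, (T_1 f)(t) = ∫_a^t f(s) ds; (2) T_α ∘ T_β = T_{α+β} for all α, β > 0; (3) the map α ↦ T_α from (0,∞) to the Banach space of bounded linear endomorphisms of L¹[a,b] (with the operator norm) is continuous. Then for every α > 0 and every f ∈ L¹[a,b], T_α f equals the Riemann–Liouville fractional integral I_{a^+}^α f, i.e. (T_α f)(t) = (1/Γ(α)) ∫_a^t (t−s)^{α−1} f(s) ds for almost every t ∈ [a,b]. -/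
open MeasureTheory Set Filter Topology


noncomputable def CMLap (a b x : ℝ) (g : ℝ → ℝ) : ℝ :=
  ∫ t in Icc a b, Real.exp (-(x * (t - a))) * g t

def CMSm (L : ℝ) (u : ℝ → ℝ) : Prop :=
  ∀ c < L, u =O[atTop] fun x => Real.exp (-(c * x))

lemma CMSm.add {L : ℝ} {u v : ℝ → ℝ} (hu : CMSm L u) (hv : CMSm L v) :
    CMSm L (fun x => u x + v x) := fun c hc => (hu c hc).add (hv c hc)

lemma CMSm.mulpow {L : ℝ} {u v : ℝ → ℝ} (N : ℝ) (hu : CMSm L u)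
    (hv : v =O[atTop] fun x : ℝ => x ^ N) :
    CMSm L (fun x => v x * u x) := by
  intro c hc
  have h1 := hu ((c + L) / 2) (by linarith)
  have h2 : (fun x : ℝ => x ^ N) =O[atTop] fun x => Real.exp (((L - c) / 2) * x) :=
    (isLittleO_rpow_exp_pos_mul_atTop N (by linarith)).isBigO
  have := (hv.trans h2).mul h1
  refine this.congr_right (fun x => ?_)
  rw [← Real.exp_add]; congr 1; ring

lemma CMSm.of_le {L : ℝ} {u v : ℝ → ℝ} (hu : CMSm L u)
    (h : ∀ᶠ x in atTop, |v x| ≤ |u x|) : CMSm L v := fun c hc =>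
  (Asymptotics.IsBigO.of_bound 1 (by simpa using h)).trans (hu c hc)

lemma CMSm_exp (L : ℝ) : CMSm L (fun x => Real.exp (-(L * x))) := by
  intro c hc
  refine Asymptotics.IsBigO.of_bound 1 ?_
  filter_upwards [eventually_ge_atTop 0] with x hx
  simp only [Real.norm_eq_abs, Real.abs_exp, one_mul]
  apply Real.exp_le_exp.2
  nlinarith

lemma CM_ibp {a t : ℝ} (hat : a ≤ t) {g : ℝ → ℝ} (hg : IntegrableOn g (Icc a t)) (y : ℝ) :
    y * ∫ s in a..t, Real.exp (y * (s - a)) * ∫ r in a..s, g r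
      = Real.exp (y * (t - a)) * (∫ r in a..t, g r) - ∫ s in a..t, Real.exp (y * (s - a)) * g s := by
  have hgi : IntervalIntegrable g volume a t :=
    (intervalIntegrable_iff_integrableOn_Icc_of_le hat).2 hg
  have h1 : AbsolutelyContinuousOnInterval (fun s => Real.exp (y * (s - a))) a t := by
    apply ContDiffOn.absolutelyContinuousOnInterval
    apply ContDiff.contDiffOn
    fun_prop
  have h2 := hgi.absolutelyContinuousOnInterval_intervalIntegral (c := a) (by simp)
  have h3 := h1.integral_mul_deriv_eq_deriv_mul h2
  have e1 : ∀ s, deriv (fun s => Real.exp (y * (s - a))) s = y * Real.exp (y * (s - a)) := by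
    intro s
    have : HasDerivAt (fun s => Real.exp (y * (s - a))) (Real.exp (y * (s - a)) * (y * 1)) s :=
      (((hasDerivAt_id s).sub_const a).const_mul y).exp
    rw [this.deriv]; ring
  have e2 : ∫ s in a..t, Real.exp (y * (s - a)) * deriv (fun s => ∫ r in a..s, g r) s
      = ∫ s in a..t, Real.exp (y * (s - a)) * g s := by
    apply intervalIntegral.integral_congr_ae
    filter_upwards [hgi.ae_hasDerivAt_integral] with s hs hs'
    rw [(hs (uIoc_subset_uIcc hs') a (by simp)).deriv]
  rw [e2] at h3
  simp only [e1, intervalIntegral.integral_same, mul_zero, sub_zero, mul_assoc] at h3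
  rw [intervalIntegral.integral_const_mul] at h3
  linarith

lemma CMLap_eq {a b : ℝ} (hab : a < b) (x : ℝ) (g : ℝ → ℝ) :
    CMLap a b x g = ∫ t in a..b, Real.exp (-(x * (t - a))) * g t := by
  rw [CMLap, intervalIntegral.integral_of_le hab.le, integral_Icc_eq_integral_Ioc]

lemma CM_expint {a b : ℝ} {g : ℝ → ℝ} (hg : IntegrableOn g (Icc a b)) {e : ℝ → ℝ}
    (he : Continuous e) : IntegrableOn (fun t => e t * g t) (Icc a b) :=
  hg.continuousOn_mul he.continuousOn isCompact_Icc

lemma CMLap_abs_le {a b x : ℝ} (hx : 0 ≤ x) {g : ℝ → ℝ} (hg : IntegrableOn g (Icc a b)) :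
    |CMLap a b x g| ≤ ∫ t in Icc a b, ‖g t‖ := by
  rw [CMLap, ← Real.norm_eq_abs]
  refine (norm_integral_le_integral_norm _).trans ?_
  refine setIntegral_mono_on (CM_expint hg (by fun_prop)).norm hg.norm measurableSet_Icc ?_
  intro t ht
  rw [norm_mul, Real.norm_eq_abs, Real.abs_exp]
  have : Real.exp (-(x * (t - a))) ≤ 1 := by
    rw [Real.exp_le_one_iff]; nlinarith [ht.1]
  nlinarith [norm_nonneg (g t)]

lemma CMLap_sub {a b x : ℝ} {f g : ℝ → ℝ} (hf : IntegrableOn f (Icc a b))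
    (hg : IntegrableOn g (Icc a b)) :
    CMLap a b x (fun t => f t - g t) = CMLap a b x f - CMLap a b x g := by
  simp only [CMLap, mul_sub]
  exact integral_sub (CM_expint hf (by fun_prop)) (CM_expint hg (by fun_prop))

lemma CM_primcont {a b : ℝ} (hab : a < b) {g : ℝ → ℝ} (hg : IntegrableOn g (Icc a b)) :
    ContinuousOn (fun t => ∫ s in a..t, g s) (Icc a b) := 
  intervalIntegral.continuousOn_primitive_interval (by rwa [uIcc_of_le hab.le]) |>.mono
    (by rw [uIcc_of_le hab.le])

/-- `φ_x (g - x V g) = e^{-xL} ∫ g`. -/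
lemma CMLap_V {a b : ℝ} (hab : a < b) (x : ℝ) {g : ℝ → ℝ} (hg : IntegrableOn g (Icc a b)) :
    CMLap a b x (fun t => g t - x * ∫ s in a..t, g s)
      = Real.exp (-(x * (b - a))) * ∫ t in Icc a b, g t := by
  have h := CM_ibp hab.le hg (-x)
  have hV : IntegrableOn (fun t => x * ∫ s in a..t, g s) (Icc a b) :=
    ((CM_primcont hab hg).const_smul x).integrableOn_Icc
  rw [CMLap_sub hg hV, CMLap_eq hab, CMLap_eq hab, integral_Icc_eq_integral_Ioc,
    ← intervalIntegral.integral_of_le hab.le]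
  have e : ∫ t in a..b, Real.exp (-(x * (t - a))) * (x * ∫ s in a..t, g s)
     = x * ∫ t in a..b, Real.exp (-(x * (t - a))) * ∫ s in a..t, g s := by
    rw [← intervalIntegral.integral_const_mul]; congr 1; ext t; ring
  rw [e]
  simp only [neg_mul] at h
  linarith

lemma CM_intexp {x : ℝ} (hx : x ≠ 0) (a t : ℝ) :
    ∫ s in a..t, Real.exp (x * (s - a)) = (Real.exp (x * (t - a)) - 1) / x := by
  have : ∀ s ∈ uIcc a t, HasDerivAt (fun s => Real.exp (x * (s - a)) / x) (Real.exp (x * (s - a))) s := by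
    intro s _
    have : HasDerivAt (fun s => Real.exp (x * (s - a)) / x) (Real.exp (x * (s - a)) * (x * 1) / x) s :=
      (((hasDerivAt_id s).sub_const a).const_mul x).exp.div_const x
    convert this using 1; field_simp
  rw [intervalIntegral.integral_eq_sub_of_hasDerivAt this]
  · simp; ring
  · apply Continuous.intervalIntegrable; fun_prop

/-- remainder -/
noncomputable def CMrem (a b x : ℝ) (g : ℝ → ℝ) (t : ℝ) : ℝ :=
  g t - x * (Real.exp (x * (t - a)) *
    (CMLap a b x g - ∫ s in a..t, Real.exp (-(x * (s - a))) * g s))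

lemma CMrem_cont {a b x : ℝ} (hab : a < b) {g : ℝ → ℝ} (hg : IntegrableOn g (Icc a b)) :
    ContinuousOn (fun t => (Real.exp (x * (t - a)) *
    (CMLap a b x g - ∫ s in a..t, Real.exp (-(x * (s - a))) * g s))) (Icc a b) := by
  apply ContinuousOn.mul (by fun_prop)
  apply ContinuousOn.sub continuousOn_const
  exact CM_primcont hab (CM_expint hg (by fun_prop))

lemma CMrem_int {a b x : ℝ} (hab : a < b) {g : ℝ → ℝ} (hg : IntegrableOn g (Icc a b)) :
    IntegrableOn (CMrem a b x g) (Icc a b) :=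
  hg.sub ((CMrem_cont hab hg).const_smul x).integrableOn_Icc

lemma CMrem_norm {a b x : ℝ} (hab : a < b) (hx : 0 < x) {g : ℝ → ℝ}
    (hg : IntegrableOn g (Icc a b)) :
    ∫ t in Icc a b, ‖CMrem a b x g t‖ ≤ (1 + x * (b - a)) * ∫ t in Icc a b, ‖g t‖ := by
  set M := ∫ t in Icc a b, ‖g t‖ with hM
  have hgi : ∀ c d, c ∈ Icc a b → d ∈ Icc a b → IntervalIntegrable 
      (fun s => Real.exp (-(x * (s - a))) * g s) volume c d := fun c d hc hd => by
    have : IntegrableOn (fun s => Real.exp (-(x * (s - a))) * g s) (uIcc c d) :=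
      (CM_expint hg (by fun_prop)).mono_set (uIcc_subset_Icc hc hd)
    exact this.intervalIntegrable
  have hpt : ∀ t ∈ Icc a b, ‖CMrem a b x g t‖ ≤ ‖g t‖ + x * M := by
    intro t ht
    refine (norm_sub_le _ _).trans ?_
    gcongr
    rw [norm_mul, Real.norm_of_nonneg hx.le]
    gcongr
    rw [CMLap_eq hab, intervalIntegral.integral_interval_sub_left
      (hgi _ _ (by simp [hab.le]) (by simp [hab.le])) (hgi _ _ (by simp [hab.le]) ht), 
      ← intervalIntegral.integral_const_mul, intervalIntegral.integral_of_le ht.2]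
    refine (norm_integral_le_integral_norm _).trans ?_
    have hsub : Ioc t b ⊆ Icc a b := fun s hs => ⟨ht.1.trans hs.1.le, hs.2⟩
    have h1 : ∫ s in Ioc t b, ‖Real.exp (x * (t - a)) * (Real.exp (-(x * (s - a))) * g s)‖
       ≤ ∫ s in Ioc t b, ‖g s‖ := by
      refine setIntegral_mono_on ?_ (hg.mono_set hsub).norm measurableSet_Ioc ?_
      · exact (((CM_expint hg (by fun_prop)).mono_set hsub).const_mul _).norm
      · intro s hs
        rw [← mul_assoc, ← Real.exp_add, norm_mul, Real.norm_eq_abs, Real.abs_exp]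
        have : Real.exp (x * (t - a) + -(x * (s - a))) ≤ 1 := by
          rw [Real.exp_le_one_iff]; nlinarith [hs.1]
        nlinarith [norm_nonneg (g s)]
    refine h1.trans ?_
    exact setIntegral_mono_set hg.norm (Eventually.of_forall fun _ => norm_nonneg _)
      (Eventually.of_forall hsub)
  have := setIntegral_mono_on (CMrem_int hab hg).norm 
    (hg.norm.add (integrableOn_const (C := x * M) (by simp))) measurableSet_Icc hpt
  refine this.trans (le_of_eq ?_)
  simp only [Pi.add_apply]
  rw [integral_add hg.norm (integrableOn_const (by simp))]
  rw [← hM]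
  simp only [integral_const, MeasurableSet.univ, measureReal_restrict_apply, univ_inter,
    Real.volume_real_Icc_of_le hab.le, smul_eq_mul]
  ring

lemma CMrem_eq {a b x : ℝ} (hab : a < b) (hx : 0 < x) {g : ℝ → ℝ}
    (hg : IntegrableOn g (Icc a b)) {t : ℝ} (ht : t ∈ Icc a b) :
    CMrem a b x g t - x * ∫ s in a..t, CMrem a b x g s = g t - x * CMLap a b x g := by
  have hsub : Icc a t ⊆ Icc a b := Icc_subset_Icc_right ht.2
  have hQ := CM_ibp ht.1 ((CM_expint (e := fun s => Real.exp (-(x * (s - a)))) hg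
    (by fun_prop)).mono_set hsub) x
  have e1 : ∫ s in a..t, Real.exp (x * (s - a)) * (Real.exp (-(x * (s - a))) * g s)
      = ∫ s in a..t, g s := by
    congr 1; ext s; rw [← mul_assoc, ← Real.exp_add]; simp
  rw [e1] at hQ
  have hc1 : IntervalIntegrable (fun s => Real.exp (x * (s - a)) * CMLap a b x g) volume a t := by
    apply Continuous.intervalIntegrable; fun_prop
  have hc2 : IntervalIntegrable (fun s => Real.exp (x * (s - a)) * 
      ∫ r in a..s, Real.exp (-(x * (r - a))) * g r) volume a t := by
    apply ContinuousOn.intervalIntegrable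
    rw [uIcc_of_le ht.1]
    exact (ContinuousOn.mul (by fun_prop) (CM_primcont hab (CM_expint hg (by fun_prop)))).mono hsub
  have hgi : IntervalIntegrable g volume a t :=
    (intervalIntegrable_iff_integrableOn_Icc_of_le ht.1).2 (hg.mono_set hsub)
  have e2 : ∫ s in a..t, CMrem a b x g s = (∫ s in a..t, g s) - x * 
      ((∫ s in a..t, Real.exp (x * (s - a)) * CMLap a b x g) -
       ∫ s in a..t, Real.exp (x * (s - a)) * ∫ r in a..s, Real.exp (-(x * (r - a))) * g r) := by
    rw [← intervalIntegral.integral_sub hc1 hc2, ← intervalIntegral.integral_const_mul,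
      ← intervalIntegral.integral_sub hgi ((hc1.sub hc2).const_mul x)]
    congr 1; ext s; rw [CMrem]; ring
  rw [e2, intervalIntegral.integral_mul_const, CM_intexp hx.ne', CMrem]
  have h5 : x * ((Real.exp (x * (t - a)) - 1) / x * CMLap a b x g)
      = (Real.exp (x * (t - a)) - 1) * CMLap a b x g := by field_simp
  linear_combination x * h5 - x * hQ


lemma CM_ae_zero {a b : ℝ} (hab : a < b) {g : ℝ → ℝ} (hg : IntegrableOn g (Icc a b))
    (h : ∀ t ∈ Ioo a b, ∫ s in a..t, g s = 0) : g =ᵐ[volume.restrict (Icc a b)] 0 := by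
  have hgi : IntervalIntegrable g volume a b :=
    (intervalIntegrable_iff_integrableOn_Icc_of_le hab.le).2 hg
  rw [EventuallyEq, ← restrict_Ioo_eq_restrict_Icc, ae_restrict_iff' measurableSet_Ioo]
  filter_upwards [hgi.ae_hasDerivAt_integral] with t ht ht'
  rw [uIcc_of_le hab.le] at ht
  have h1 := ht (Ioo_subset_Icc_self ht') a (by simp [hab.le])
  have h2 : HasDerivAt (fun x => ∫ s in a..x, g s) 0 t := by
    refine (hasDerivAt_const t (0:ℝ)).congr_of_eventuallyEq ?_
    filter_upwards [isOpen_Ioo.mem_nhds ht'] with u hu using h u hu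
  exact h1.unique h2

/-- Phragmén -/
lemma CM_unique {a b : ℝ} (hab : a < b) {g : ℝ → ℝ} (hg : IntegrableOn g (Icc a b))
    (h : CMSm (b - a) (fun x => CMLap a b x g)) : g =ᵐ[volume.restrict (Icc a b)] 0 := by
  apply CM_ae_zero hab hg
  intro τ hτ
  obtain ⟨c, hc1, hc2⟩ := exists_between (show τ - a < b - a by linarith [hτ.2])
  obtain ⟨C, hC⟩ := (h c hc2).bound
  obtain ⟨x0, hx0⟩ := eventually_atTop.1 hC
  -- the function
  set z : ℝ → ℝ → ℝ := fun x s => Real.exp (x * (τ - s)) with hz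
  have hsum : ∀ x, 0 < x → HasSum (fun k : ℕ => (-1)^k / (k.factorial : ℝ) * 
      (Real.exp (k * x * (τ - a)) * CMLap a b (k * x) g))
      (∫ s in Icc a b, Real.exp (- z x s) * g s) := by
    intro x hx
    have hF := hasSum_integral_of_summable_integral_norm (μ := volume.restrict (Icc a b))
      (F := fun (k : ℕ) s => (-z x s)^k / (k.factorial : ℝ) * g s) ?_ ?_
    · have e1 : (fun k : ℕ => (-1)^k / (k.factorial : ℝ) * 
          (Real.exp (k * x * (τ - a)) * CMLap a b (k * x) g)) = fun k : ℕ => 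
          ∫ s in Icc a b, (-z x s)^k / (k.factorial : ℝ) * g s := by
        ext k
        rw [CMLap, ← integral_const_mul, ← integral_const_mul]
        congr 1; ext s
        have : (-z x s)^k = (-1)^k * (Real.exp (k * x * (τ - a)) * Real.exp (-(k * x * (s - a)))) := by
          rw [neg_pow, hz, ← Real.exp_nat_mul, ← Real.exp_add]; congr 2; ring
        rw [this]; ring
      have e2 : (∫ s in Icc a b, Real.exp (- z x s) * g s) = ∫ s in Icc a b, 
          ∑' k : ℕ, (-z x s)^k / (k.factorial : ℝ) * g s := by
        congr 1; ext s
        rw [tsum_mul_right, Real.exp_eq_exp_ℝ, NormedSpace.exp_eq_tsum_div]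
      rw [e1, e2]
      exact hF
    · intro k
      apply CM_expint hg; fun_prop
    · set K := Real.exp (x * (τ - a))
      refine Summable.of_nonneg_of_le (fun k => integral_nonneg fun _ => norm_nonneg _) (fun k => ?_)
        ((Real.summable_pow_div_factorial K).mul_right (∫ s in Icc a b, ‖g s‖))
      rw [← integral_const_mul]
      refine setIntegral_mono_on ?_ (hg.norm.const_mul _) measurableSet_Icc ?_
      · apply Integrable.norm; apply CM_expint hg; fun_prop
      · intro s hs
        rw [norm_mul, norm_div, norm_pow, norm_neg, hz, Real.norm_eq_abs, Real.abs_exp, 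
          RCLike.norm_natCast]
        gcongr
        simp only [K]; apply Real.exp_le_exp.2; nlinarith [hs.1]
  have hbd : ∀ᶠ x in atTop, |(∫ s in Icc a b, Real.exp (- z x s) * g s) - ∫ s in Icc a b, g s| ≤ 
      C * (Real.exp (Real.exp (-((c - (τ - a)) * x))) - 1) := by
    filter_upwards [eventually_ge_atTop x0, eventually_gt_atTop 0] with x hx hx'
    set q := Real.exp (-((c - (τ - a)) * x))
    have h1 := (hasSum_nat_add_iff' 1).2 (hsum x hx')
    have h2 : HasSum (fun k : ℕ => C * (q ^ (k+1) / ((k+1).factorial : ℝ))) (C * (Real.exp q - 1)) := by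
      have h3 : HasSum (fun k : ℕ => q ^ k / (k.factorial : ℝ)) (Real.exp q) := by
        rw [Real.exp_eq_exp_ℝ]; exact NormedSpace.expSeries_div_hasSum_exp q
      simpa using ((hasSum_nat_add_iff' 1).2 h3).mul_left C
    have h4 := tsum_of_norm_bounded h2 (f := fun k : ℕ => (-1)^(k+1) / ((k+1).factorial : ℝ) * 
      (Real.exp ((k+1 : ℕ) * x * (τ - a)) * CMLap a b ((k+1 : ℕ) * x) g)) ?_
    · rw [h1.tsum_eq] at h4
      simpa [CMLap] using h4
    · intro k
      have h5 := hx0 ((k+1 : ℕ) * x) (by push_cast; nlinarith [(Nat.cast_nonneg k : (0:ℝ) ≤ k)])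
      rw [norm_mul, norm_div, norm_pow, norm_neg, norm_one, one_pow, norm_mul, RCLike.norm_natCast,
        Real.norm_eq_abs (Real.exp _), Real.abs_exp]
      rw [Real.norm_eq_abs (Real.exp _), Real.abs_exp] at h5
      calc _ ≤ 1 / ((k+1).factorial : ℝ) * (Real.exp ((k+1 : ℕ) * x * (τ - a)) * 
              (C * Real.exp (-(c * ((k+1 : ℕ) * x))))) := by gcongr
        _ = _ := by
          have : q ^ (k+1) = Real.exp ((k+1 : ℕ) * x * (τ - a)) * Real.exp (-(c * ((k+1 : ℕ) * x))) := by
            simp only [q]; rw [← Real.exp_nat_mul, ← Real.exp_add]; congr 1; ring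
          rw [this]; ring
  have hlim1 : Tendsto (fun x => C * (Real.exp (Real.exp (-((c - (τ - a)) * x))) - 1)) atTop (𝓝 0) := by
    have : Tendsto (fun x => Real.exp (-((c - (τ - a)) * x))) atTop (𝓝 0) := by
      apply Real.tendsto_exp_neg_atTop_nhds_zero.comp
      exact tendsto_id.const_mul_atTop (by linarith)
    have := ((Real.continuous_exp.tendsto 0).comp this).sub_const 1 |>.const_mul C
    simpa using this
  have hlim2 : Tendsto (fun x => ∫ s in Icc a b, Real.exp (- z x s) * g s) atTop 
      (𝓝 (∫ s in Icc a b, (Ioi τ).indicator g s)) := by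
    apply tendsto_integral_filter_of_dominated_convergence (fun s => ‖g s‖)
    · refine Eventually.of_forall fun x => ?_
      exact (CM_expint (e := fun s => Real.exp (- z x s)) hg (by fun_prop)).aestronglyMeasurable
    · refine Eventually.of_forall fun x => Eventually.of_forall fun s => ?_
      rw [norm_mul, Real.norm_eq_abs, Real.abs_exp]
      have : Real.exp (-z x s) ≤ 1 := by
        rw [Real.exp_le_one_iff]; simp only [hz]; linarith [Real.exp_pos (x * (τ - s))]
      nlinarith [norm_nonneg (g s)]
    · exact hg.norm
    · have : ∀ᵐ s ∂(volume.restrict (Icc a b)), s ≠ τ := 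
        ae_restrict_of_ae (by simp [ae_iff, measure_singleton])
      filter_upwards [this] with s hs
      rcases lt_or_gt_of_ne hs with hs | hs
      · rw [indicator_of_notMem (by simpa using hs.le)]
        have : Tendsto (fun x => Real.exp (- z x s)) atTop (𝓝 0) := by
          apply Real.tendsto_exp_neg_atTop_nhds_zero.comp
          apply Real.tendsto_exp_atTop.comp
          exact tendsto_id.atTop_mul_const (by linarith)
        simpa using this.mul_const (g s)
      · rw [indicator_of_mem (by simpa using hs)]
        have : Tendsto (fun x => z x s) atTop (𝓝 0) := by
          apply Real.tendsto_exp_atBot.comp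
          exact tendsto_id.atTop_mul_const_of_neg (by linarith)
        have := ((Real.continuous_exp.tendsto _).comp this.neg).mul_const (g s)
        simpa using this
  have hlim3 := (hlim2.sub_const (∫ s in Icc a b, g s))
  have hlim4 := squeeze_zero' (Eventually.of_forall fun _ => abs_nonneg _) hbd hlim1
  have h6 := tendsto_nhds_unique hlim3.abs hlim4
  rw [abs_eq_zero, setIntegral_indicator measurableSet_Ioi] at h6
  have e1 : Icc a b ∩ Ioi τ = Ioc τ b := by
    ext s; simp only [mem_inter_iff, mem_Icc, mem_Ioi, mem_Ioc]
    exact ⟨fun h => ⟨h.2, h.1.2⟩, fun h => ⟨⟨by linarith [hτ.1], h.2⟩, h.1⟩⟩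
  have hgi : IntervalIntegrable g volume a b :=
    (intervalIntegrable_iff_integrableOn_Icc_of_le hab.le).2 hg
  have hm : τ ∈ uIcc a b := by rw [uIcc_of_le hab.le]; exact Ioo_subset_Icc_self hτ
  rw [e1, integral_Icc_eq_integral_Ioc, ← intervalIntegral.integral_of_le hτ.2.le,
    ← intervalIntegral.integral_of_le hab.le, ← intervalIntegral.integral_add_adjacent_intervals
     (hgi.mono_set (uIcc_subset_uIcc_left hm)) (hgi.mono_set (uIcc_subset_uIcc_right hm))] at h6
  linarith


lemma CM_tail {α x d : ℝ} (hα : 0 < α) (hx : 1 ≤ x) (hd : 0 ≤ d) :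
    |(∫ u in Ioc 0 d, Real.exp (-(x * u)) * u ^ (α - 1)) - x ^ (-α) * Real.Gamma α| ≤
      Real.Gamma α * Real.exp (-((x - 1) * d)) := by
  have hx0 : 0 < x := by linarith
  have key : ∫ u in Ioi (0:ℝ), Real.exp (-(x * u)) * u ^ (α - 1) = x ^ (-α) * Real.Gamma α := by
    have := Real.integral_rpow_mul_exp_neg_mul_Ioi hα hx0
    rw [one_div, Real.inv_rpow hx0.le, ← Real.rpow_neg hx0.le] at this
    rw [← this]; congr 1; ext u; ring
  have hG1 : IntegrableOn (fun u => Real.exp (-u) * u ^ (α - 1)) (Ioi 0) :=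
    Real.GammaIntegral_convergent hα
  have hint : IntegrableOn (fun u => Real.exp (-(x * u)) * u ^ (α - 1)) (Ioi 0) := by
    by_contra hcon
    have h0 := integral_undef hcon
    rw [key] at h0
    have : 0 < x ^ (-α) * Real.Gamma α := mul_pos (Real.rpow_pos_of_pos hx0 _) (Real.Gamma_pos_of_pos hα)
    linarith
  have hsp : Ioi (0:ℝ) = Ioc 0 d ∪ Ioi d := (Ioc_union_Ioi_eq_Ioi hd).symm
  have h1 : ∫ u in Ioi (0:ℝ), Real.exp (-(x * u)) * u ^ (α - 1) =
      (∫ u in Ioc 0 d, Real.exp (-(x * u)) * u ^ (α - 1)) + 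
       ∫ u in Ioi d, Real.exp (-(x * u)) * u ^ (α - 1) := by
    rw [hsp]
    exact setIntegral_union (Set.disjoint_left.2 fun u hu hu' => not_lt.2 hu.2 hu') measurableSet_Ioi
      (hint.mono_set Ioc_subset_Ioi_self) (hint.mono_set (Ioi_subset_Ioi hd))
  rw [← key, h1, sub_add_cancel_left, abs_neg, abs_of_nonneg]
  · calc ∫ u in Ioi d, Real.exp (-(x * u)) * u ^ (α - 1) 
        ≤ ∫ u in Ioi d, Real.exp (-((x - 1) * d)) * (Real.exp (-u) * u ^ (α - 1)) := by
          refine setIntegral_mono_on (hint.mono_set (Ioi_subset_Ioi hd)) 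
            ((hG1.mono_set (Ioi_subset_Ioi hd)).const_mul _) measurableSet_Ioi ?_
          intro u hu
          have hu' : d < u := hu
          rw [← mul_assoc, ← Real.exp_add]
          have : (0:ℝ) ≤ u ^ (α - 1) := Real.rpow_nonneg (by linarith) _
          gcongr
          nlinarith
      _ = Real.exp (-((x - 1) * d)) * ∫ u in Ioi d, (Real.exp (-u) * u ^ (α - 1)) := integral_const_mul _ _
      _ ≤ Real.exp (-((x - 1) * d)) * ∫ u in Ioi 0, (Real.exp (-u) * u ^ (α - 1)) := by
          refine mul_le_mul_of_nonneg_left ?_ (Real.exp_pos _).le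
          refine setIntegral_mono_set hG1 ?_ (Ioi_subset_Ioi hd).eventuallyLE
          refine (ae_restrict_iff' measurableSet_Ioi).2 (Eventually.of_forall fun u hu => ?_)
          have hu' : 0 < u := hu
          simp only [Pi.zero_apply]; positivity
      _ = _ := by rw [← Real.Gamma_eq_integral hα]; ring
  · refine setIntegral_nonneg measurableSet_Ioi fun u hu => ?_
    have : (0:ℝ) < u := lt_of_le_of_lt hd hu
    positivity

lemma CM_J {a b α : ℝ} (hab : a < b) (hα : 0 < α) {g : ℝ → ℝ} (hg : IntegrableOn g (Icc a b)) :
    IntegrableOn (fun t => ∫ s in a..t, (t - s) ^ (α - 1) * g s) (Icc a b) ∧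
    ∀ x, 1 ≤ x → |CMLap a b x (fun t => ∫ s in a..t, (t - s) ^ (α - 1) * g s) 
       - x ^ (-α) * Real.Gamma α * CMLap a b x g| ≤ 
       Real.Gamma α * Real.exp (-((x - 1) * (b - a))) * ∫ t in Icc a b, ‖g t‖ := by
  set k : ℝ → ℝ := (Ioc 0 (b - a)).indicator (fun u => u ^ (α - 1)) with hk
  set G : ℝ → ℝ := (Icc a b).indicator g with hG
  set H : ℝ → ℝ := fun t => ∫ s in a..t, (t - s) ^ (α - 1) * g s with hH
  have hki : IntegrableOn (fun u : ℝ => u ^ (α - 1)) (Ioc 0 (b - a)) :=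
    (intervalIntegral.intervalIntegrable_rpow' (by linarith : -1 < α - 1)).1
  have hKx : ∀ x, Integrable (fun u => Real.exp (-(x * u)) * k u) := by
    intro x
    have h1 : IntegrableOn (fun u : ℝ => Real.exp (-(x * u)) * u ^ (α - 1)) (Ioc 0 (b - a)) := by
      have h2 : IntegrableOn (fun u : ℝ => u ^ (α - 1)) (Icc 0 (b - a)) := 
        (integrableOn_Icc_iff_integrableOn_Ioc (by simp)).2 hki
      exact (CM_expint h2 (by fun_prop)).mono_set Ioc_subset_Icc_self
    have := (integrable_indicator_iff measurableSet_Ioc).2 h1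
    refine this.congr (Eventually.of_forall fun u => ?_)
    simp only [hk, indicator_apply]; split_ifs <;> simp
  have hGx : ∀ x, Integrable (fun s => Real.exp (-(x * (s - a))) * G s) := by
    intro x
    have := (integrable_indicator_iff measurableSet_Icc).2 
      (CM_expint (e := fun s => Real.exp (-(x * (s - a)))) hg (by fun_prop))
    refine this.congr (Eventually.of_forall fun u => ?_)
    simp only [hG, indicator_apply]; split_ifs <;> simp
  have hprod : ∀ x, Integrable (fun p : ℝ × ℝ => (Real.exp (-(x * (p.2 - a))) * G p.2) * 
      (Real.exp (-(x * (p.1 - p.2))) * k (p.1 - p.2))) (volume.prod volume) := fun x =>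
    (hGx x).convolution_integrand (ContinuousLinearMap.mul ℝ ℝ) (hKx x)
  have hpt : ∀ x, ∀ t ∈ Icc a b, Real.exp (-(x * (t - a))) * H t = 
      ∫ s, (Real.exp (-(x * (s - a))) * G s) * (Real.exp (-(x * (t - s))) * k (t - s)) := by
    intro x t ht
    rw [hH]
    simp only
    rw [intervalIntegral.integral_of_le ht.1, ← integral_Icc_eq_integral_Ioc, 
      integral_Icc_eq_integral_Ico, ← integral_const_mul, ← integral_indicator measurableSet_Ico]
    congr 1; ext s
    by_cases hs : s ∈ Ico a t
    · have h1 : s ∈ Icc a b := ⟨hs.1, hs.2.le.trans ht.2⟩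
      have h2 : t - s ∈ Ioc 0 (b - a) := ⟨by linarith [hs.2], by linarith [hs.1, ht.2]⟩
      rw [indicator_of_mem hs, hG, hk, indicator_of_mem h1, indicator_of_mem h2]
      have : Real.exp (-(x * (t - a))) = Real.exp (-(x * (s - a))) * Real.exp (-(x * (t - s))) := by
        rw [← Real.exp_add]; congr 1; ring
      rw [this]; ring
    · rw [indicator_of_notMem hs]
      by_cases h1 : s ∈ Icc a b
      · have h2 : t - s ∉ Ioc 0 (b - a) := fun h2 => hs ⟨h1.1, by linarith [h2.1]⟩
        rw [hk, indicator_of_notMem h2]; simp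
      · rw [hG, indicator_of_notMem h1]; simp
  refine ⟨?_, ?_⟩
  · have h1 := (hprod 0).integral_prod_left
    refine (h1.integrableOn (s := Icc a b)).congr_fun (fun t ht => ?_) measurableSet_Icc
    have := hpt 0 t ht
    simp only [zero_mul, neg_zero, Real.exp_zero, one_mul] at this ⊢
    exact this.symm
  · intro x hx
    have hr : Integrable (fun p : ℝ × ℝ => (Real.exp (-(x * (p.2 - a))) * G p.2) * 
      (Real.exp (-(x * (p.1 - p.2))) * k (p.1 - p.2))) ((volume.restrict (Icc a b)).prod volume) := by
      have := (hprod x).integrableOn (s := Icc a b ×ˢ univ)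
      rwa [IntegrableOn, ← Measure.prod_restrict, Measure.restrict_univ] at this
    have e1 : CMLap a b x H = ∫ s, (Real.exp (-(x * (s - a))) * G s) * 
        ∫ t in Icc a b, (Real.exp (-(x * (t - s))) * k (t - s)) := by
      rw [CMLap, setIntegral_congr_fun measurableSet_Icc (hpt x), integral_integral_swap hr]
      congr 1; ext s; rw [integral_const_mul]
    have e2 : CMLap a b x g = ∫ s, Real.exp (-(x * (s - a))) * G s := by
      rw [CMLap, ← integral_indicator measurableSet_Icc]
      congr 1; ext s
      simp only [hG, indicator_apply]; split_ifs <;> simp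
    have e3 : ∀ s ∈ Icc a b, ∫ t in Icc a b, (Real.exp (-(x * (t - s))) * k (t - s)) = 
        ∫ u in Ioc 0 (b - s), Real.exp (-(x * u)) * u ^ (α - 1) := by
      intro s hs
      rw [← integral_indicator measurableSet_Icc, ← integral_indicator measurableSet_Ioc,
        ← integral_sub_right_eq_self ((Ioc 0 (b - s)).indicator _) s]
      congr 1; ext t
      by_cases h1 : t ∈ Icc a b
      · by_cases h2 : t - s ∈ Ioc 0 (b - s)
        · have h3 : t - s ∈ Ioc 0 (b - a) := ⟨h2.1, by linarith [h2.2, hs.1]⟩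
          rw [indicator_of_mem h1, indicator_of_mem h2, hk, indicator_of_mem h3]
        · have h3 : t - s ∉ Ioc 0 (b - a) := fun h3 => h2 ⟨h3.1, by linarith [h1.2]⟩
          rw [indicator_of_mem h1, indicator_of_notMem h2, hk, indicator_of_notMem h3, mul_zero]
      · have h2 : t - s ∉ Ioc 0 (b - s) := fun h2 => h1 ⟨by linarith [h2.1, hs.1], by linarith [h2.2]⟩
        rw [indicator_of_notMem h1, indicator_of_notMem h2]
    have hi1 : Integrable (fun s => (Real.exp (-(x * (s - a))) * G s) * 
        ∫ t in Icc a b, (Real.exp (-(x * (t - s))) * k (t - s))) := by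
      refine hr.integral_prod_right.congr (Eventually.of_forall fun s => ?_)
      simp only [integral_const_mul]
    have hGi : Integrable G := (integrable_indicator_iff measurableSet_Icc).2 hg
    rw [e1, e2, ← integral_const_mul, ← integral_sub hi1 ((hGx x).const_mul _), ← Real.norm_eq_abs]
    have e4 : ∫ t in Icc a b, ‖g t‖ = ∫ t, ‖G t‖ := by
      rw [← integral_indicator measurableSet_Icc]; congr 1; ext s
      rw [hG, norm_indicator_eq_indicator_norm]
    rw [e4, ← integral_const_mul]
    apply norm_integral_le_of_norm_le (hGi.norm.const_mul _)
    refine Eventually.of_forall fun s => ?_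
    by_cases hs : s ∈ Icc a b
    · rw [e3 s hs]
      have h1 := CM_tail hα hx (show 0 ≤ b - s by linarith [hs.2])
      rw [mul_comm (x ^ (-α) * Real.Gamma α), ← mul_sub, norm_mul, norm_mul, Real.norm_eq_abs (Real.exp _),
        Real.abs_exp, Real.norm_eq_abs (_ - _)]
      have h2 : Real.exp (-(x * (s - a))) * Real.exp (-((x - 1) * (b - s))) ≤ Real.exp (-((x - 1) * (b - a))) := by
        rw [← Real.exp_add]; apply Real.exp_le_exp.2; nlinarith [hs.1]
      have hΓ := Real.Gamma_pos_of_pos hα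
      calc _ ≤ Real.exp (-(x * (s - a))) * ‖G s‖ * (Real.Gamma α * Real.exp (-((x - 1) * (b - s)))) := by
            gcongr
        _ = Real.Gamma α * (Real.exp (-(x * (s - a))) * Real.exp (-((x - 1) * (b - s)))) * ‖G s‖ := by ring
        _ ≤ _ := by gcongr
    · have : G s = 0 := by rw [hG, indicator_of_notMem hs]
      simp [this]


def CMQ (a b : ℝ) (A : Lp ℝ 1 (volume.restrict (Icc a b)) →L[ℝ] Lp ℝ 1 (volume.restrict (Icc a b)))
    (m : ℝ → ℝ) : Prop :=
  ∃ ε : ℝ → ℝ, CMSm (b - a) ε ∧ ∀ᶠ x in atTop, ∀ g : Lp ℝ 1 (volume.restrict (Icc a b)),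
    |CMLap a b x (A g) - m x * CMLap a b x g| ≤ ε x * ‖g‖

lemma CM_Lpint {a b : ℝ} (g : Lp ℝ 1 (volume.restrict (Icc a b))) : IntegrableOn g (Icc a b) :=
  L1.integrable_coeFn g

lemma CMLap_congr {a b x : ℝ} {f g : ℝ → ℝ} (h : f =ᵐ[volume.restrict (Icc a b)] g) :
    CMLap a b x f = CMLap a b x g := by
  apply integral_congr_ae
  filter_upwards [h] with t ht
  rw [ht]

lemma CMLap_le {a b x : ℝ} (hx : 0 ≤ x) (g : Lp ℝ 1 (volume.restrict (Icc a b))) :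
    |CMLap a b x g| ≤ ‖g‖ := by
  rw [L1.norm_eq_integral_norm]
  exact CMLap_abs_le hx (CM_Lpint g)

lemma CMQ.comp {a b : ℝ} {A B : Lp ℝ 1 (volume.restrict (Icc a b)) →L[ℝ] Lp ℝ 1 (volume.restrict (Icc a b))}
    {m n : ℝ → ℝ} {N : ℝ} (hA : CMQ a b A m) (hB : CMQ a b B n) 
    (hm : m =O[atTop] fun x : ℝ => x ^ N) :
    CMQ a b (A.comp B) (fun x => m x * n x) := by
  obtain ⟨ε, hε, h1⟩ := hA
  obtain ⟨δ, hδ, h2⟩ := hB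
  have hB0 : (fun _ : ℝ => ‖B‖) =O[atTop] fun x : ℝ => x ^ (0:ℝ) := by
    simpa using Asymptotics.isBigO_const_const ‖B‖ (one_ne_zero : (1:ℝ) ≠ 0) (atTop : Filter ℝ)
  refine ⟨fun x => ‖B‖ * |ε x| + |m x| * δ x, 
    CMSm.add (CMSm.mulpow 0 (hε.of_le (by simp)) hB0) (CMSm.mulpow N hδ hm.norm_left), ?_⟩
  filter_upwards [h1, h2] with x h1 h2 g
  have e1 := h1 (B g)
  have e2 := h2 g
  have e3 : ε x * ‖B g‖ ≤ |ε x| * (‖B‖ * ‖g‖) := by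
    gcongr
    · exact le_abs_self _
    · exact B.le_opNorm g
  rw [ContinuousLinearMap.comp_apply]
  have : CMLap a b x (A (B g)) - m x * n x * CMLap a b x g = 
    (CMLap a b x (A (B g)) - m x * CMLap a b x (B g)) + 
     m x * (CMLap a b x (B g) - n x * CMLap a b x g) := by ring
  rw [this]
  refine (abs_add_le _ _).trans ?_
  rw [abs_mul]
  have e4 := mul_le_mul_of_nonneg_left e2 (abs_nonneg (m x))
  linarith

lemma CMQ.subst {a b : ℝ} {A : Lp ℝ 1 (volume.restrict (Icc a b)) →L[ℝ] Lp ℝ 1 (volume.restrict (Icc a b))}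
    {m n : ℝ → ℝ} (hA : CMQ a b A m) (h : CMSm (b - a) (fun x => m x - n x)) : CMQ a b A n := by
  obtain ⟨ε, hε, h1⟩ := hA
  refine ⟨fun x => ε x + |m x - n x|, hε.add (h.of_le (by simp)), ?_⟩
  filter_upwards [h1, eventually_ge_atTop 0] with x h1 hx g
  have : CMLap a b x (A g) - n x * CMLap a b x g = 
    (CMLap a b x (A g) - m x * CMLap a b x g) + (m x - n x) * CMLap a b x g := by ring
  rw [this, add_mul]
  refine (abs_add_le _ _).trans (add_le_add (h1 g) ?_)
  rw [abs_mul]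
  gcongr
  exact CMLap_le hx g

lemma CMLap_one {a b x : ℝ} (hab : a < b) (hx : 0 < x) :
    CMLap a b x (fun _ => 1) = (1 - Real.exp (-(x * (b - a)))) / x := by
  rw [CMLap_eq hab]
  have := CM_intexp (neg_ne_zero.2 hx.ne') a b
  simp only [neg_mul] at this
  simp only [mul_one]
  rw [this]
  field_simp
  ring

lemma CMQ.uniq {a b : ℝ} (hab : a < b) {A : Lp ℝ 1 (volume.restrict (Icc a b)) →L[ℝ] Lp ℝ 1 (volume.restrict (Icc a b))}
    {m n : ℝ → ℝ} (hA : CMQ a b A m) (hB : CMQ a b A n) : CMSm (b - a) (fun x => m x - n x) := by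
  obtain ⟨ε, hε, h1⟩ := hA
  obtain ⟨δ, hδ, h2⟩ := hB
  have hone : Integrable (fun _ : ℝ => (1:ℝ)) (volume.restrict (Icc a b)) := integrable_const _
  set e := hone.toL1 with he
  have hp : (fun x : ℝ => 2 * ‖e‖ * x) =O[atTop] fun x : ℝ => x ^ (1:ℝ) := by
    simpa using (Asymptotics.isBigO_refl (fun x : ℝ => x) atTop).const_mul_left (2 * ‖e‖)
  have hlim : ∀ᶠ x in atTop, Real.exp (-(x * (b - a))) ≤ 1 / 2 := by
    have : Tendsto (fun x => Real.exp (-(x * (b - a)))) atTop (𝓝 0) := 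
      Real.tendsto_exp_neg_atTop_nhds_zero.comp (tendsto_id.atTop_mul_const (by linarith))
    exact this.eventually_le_const (by norm_num)
  refine (CMSm.mulpow 1 (hε.add hδ) hp).of_le ?_
  filter_upwards [h1, h2, hlim, eventually_gt_atTop 0] with x h1 h2 h3 hx
  have e1 := h1 e
  have e2 := h2 e
  rw [CMLap_congr (f := e) (hone.coeFn_toL1), CMLap_one hab hx] at e1 e2
  set y := (1 - Real.exp (-(x * (b - a)))) / x with hy
  have hy1 : 1 ≤ 2 * x * y := by rw [hy]; field_simp; linarith
  have hy0 : 0 < y := by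
    rw [hy]; apply div_pos _ hx; linarith
  have e3 : |m x - n x| * y ≤ (ε x + δ x) * ‖e‖ := by
    have h0 : |m x - n x| * y = |(m x - n x) * y| := by rw [abs_mul, abs_of_pos hy0]
    rw [h0]
    have : (m x - n x) * y = (CMLap a b x (A e) - n x * y) - (CMLap a b x (A e) - m x * y) := by ring
    rw [this]
    refine (abs_sub _ _).trans ?_
    linarith
  refine le_trans ?_ (le_abs_self _)
  have e4 : |m x - n x| ≤ |m x - n x| * (2 * x * y) := le_mul_of_one_le_right (abs_nonneg _) hy1
  nlinarith

lemma CMQ_exists {a b : ℝ} (hab : a < b) 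
    {V A : Lp ℝ 1 (volume.restrict (Icc a b)) →L[ℝ] Lp ℝ 1 (volume.restrict (Icc a b))}
    (hV : ∀ f : Lp ℝ 1 (volume.restrict (Icc a b)),
      (V f : ℝ → ℝ) =ᵐ[volume.restrict (Icc a b)] fun t => ∫ s in a..t, f s)
    (hAV : ∀ g, A (V g) = V (A g)) :
    ∃ m : ℝ → ℝ, (m =O[atTop] fun x : ℝ => x ^ (1:ℝ)) ∧ CMQ a b A m := by
  have hE : ∀ x : ℝ, Integrable (fun t => Real.exp (x * (t - a))) (volume.restrict (Icc a b)) := 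
    fun x => (Continuous.continuousOn (by fun_prop)).integrableOn_Icc
  have hI : ∀ g : Lp ℝ 1 (volume.restrict (Icc a b)), |∫ t in Icc a b, g t| ≤ ‖g‖ := by
    intro g
    rw [L1.norm_eq_integral_norm, ← Real.norm_eq_abs]
    exact norm_integral_le_integral_norm (fun t => g t)
  set m : ℝ → ℝ := fun x => x * Real.exp (-(x * (b - a))) * 
    ∫ t in Icc a b, (A (hE x).toL1) t with hm
  refine ⟨m, ?_, fun x => Real.exp (-((b - a) * x)) * (‖A‖ * (1 + x * (b - a))), ?_, ?_⟩
  · refine Asymptotics.IsBigO.of_bound (‖A‖ * (b - a)) ?_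
    filter_upwards [eventually_gt_atTop 0] with x hx
    have h1 : ‖(hE x).toL1‖ ≤ Real.exp (x * (b - a)) * (b - a) := by
      rw [L1.norm_of_fun_eq_integral_norm]
      have := setIntegral_mono_on (hE x).norm (integrable_const (Real.exp (x * (b - a)))) 
        (measurableSet_Icc (a := a) (b := b)) (fun t ht => by
          rw [Real.norm_eq_abs, Real.abs_exp]; apply Real.exp_le_exp.2; nlinarith [ht.2])
      refine this.trans (le_of_eq ?_)
      simp [hab.le, mul_comm]
    rw [Real.rpow_one, Real.norm_of_nonneg hx.le, hm, norm_mul, norm_mul, Real.norm_of_nonneg hx.le, 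
      Real.norm_eq_abs (Real.exp _), Real.abs_exp, Real.norm_eq_abs]
    have h2 := (hI (A (hE x).toL1)).trans (A.le_opNorm _)
    have h3 : Real.exp (-(x * (b - a))) * Real.exp (x * (b - a)) = 1 := by rw [← Real.exp_add]; simp
    calc _ ≤ x * Real.exp (-(x * (b - a))) * (‖A‖ * (Real.exp (x * (b - a)) * (b - a))) := by
          gcongr; exact h2.trans (by gcongr)
      _ = x * (Real.exp (-(x * (b - a))) * Real.exp (x * (b - a))) * ‖A‖ * (b - a) := by ring
      _ = _ := by rw [h3]; ring
      _ ≤ _ := le_rfl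
  · have hp : (fun x : ℝ => ‖A‖ * (1 + x * (b - a))) =O[atTop] fun x : ℝ => x ^ (1:ℝ) := by
      refine Asymptotics.IsBigO.of_bound (‖A‖ * (1 + (b - a))) ?_
      filter_upwards [eventually_ge_atTop 1] with x hx
      have hba : 0 < b - a := by linarith
      rw [Real.rpow_one, Real.norm_of_nonneg (by positivity), Real.norm_of_nonneg (by positivity),
        mul_assoc]
      gcongr
      nlinarith
    have := CMSm.mulpow 1 (CMSm_exp (b - a)) hp
    exact this.of_le (by simp [mul_comm])
  · filter_upwards [eventually_gt_atTop 0] with x hx g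
    have hg := CM_Lpint g
    have hr : Integrable (CMrem a b x g) (volume.restrict (Icc a b)) := CMrem_int hab hg
    set E := (hE x).toL1 with hEdef
    set r := hr.toL1 with hrdef
    -- the key identities
    have hEV : E - x • V E = (integrable_const (1:ℝ) : 
        Integrable (fun _ => (1:ℝ)) (volume.restrict (Icc a b))).toL1 := by
      apply Lp.ext
      have h4 := (hE x).coeFn_toL1
      filter_upwards [Lp.coeFn_sub E (x • V E), Lp.coeFn_smul x (V E), hV E, h4,
        (integrable_const (1:ℝ) : 
        Integrable (fun _ => (1:ℝ)) (volume.restrict (Icc a b))).coeFn_toL1, 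
        ae_restrict_mem measurableSet_Icc] with t h1 h2 h3 h5 h6 ht
      have h7 : ∫ s in a..t, E s = ∫ s in a..t, Real.exp (x * (s - a)) := by
        apply intervalIntegral.integral_congr_ae
        have h8 := (ae_restrict_iff' measurableSet_Icc).1 h4
        filter_upwards [h8] with s hs hs'
        rw [uIoc_of_le ht.1] at hs'
        exact hs ⟨hs'.1.le, hs'.2.trans ht.2⟩
      rw [h1, h6, Pi.sub_apply, h2, Pi.smul_apply, h3, h7, CM_intexp hx.ne', h5, smul_eq_mul]
      field_simp; ring
    have hrV : r - x • V r = g - (x * CMLap a b x g) • (integrable_const (1:ℝ) : 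
        Integrable (fun _ => (1:ℝ)) (volume.restrict (Icc a b))).toL1 := by
      apply Lp.ext
      have h4 := hr.coeFn_toL1
      filter_upwards [Lp.coeFn_sub r (x • V r), Lp.coeFn_smul x (V r), hV r, h4,
        (integrable_const (1:ℝ) : 
        Integrable (fun _ => (1:ℝ)) (volume.restrict (Icc a b))).coeFn_toL1, 
        ae_restrict_mem measurableSet_Icc, Lp.coeFn_sub g ((x * CMLap a b x g) • (integrable_const (1:ℝ) : 
        Integrable (fun _ => (1:ℝ)) (volume.restrict (Icc a b))).toL1), 
        Lp.coeFn_smul (x * CMLap a b x g) ((integrable_const (1:ℝ) : 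
        Integrable (fun _ => (1:ℝ)) (volume.restrict (Icc a b))).toL1)] with t h1 h2 h3 h5 h6 ht h9 h10
      have h7 : ∫ s in a..t, r s = ∫ s in a..t, CMrem a b x g s := by
        apply intervalIntegral.integral_congr_ae
        have h8 := (ae_restrict_iff' measurableSet_Icc).1 h4
        filter_upwards [h8] with s hs hs'
        rw [uIoc_of_le ht.1] at hs'
        exact hs ⟨hs'.1.le, hs'.2.trans ht.2⟩
      rw [h1, h9, Pi.sub_apply, Pi.sub_apply, h2, h10, Pi.smul_apply, Pi.smul_apply, h3, h7, h6, h5, 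
        smul_eq_mul, smul_eq_mul, mul_one]
      exact CMrem_eq hab hx hg ht
    set c := x * CMLap a b x g with hc
    set G := c • E + r with hG
    have hGV : G - x • V G = g := by
      have : G - x • V G = c • (E - x • V E) + (r - x • V r) := by
        rw [hG, map_add, map_smul]; module
      rw [this, hEV, hrV]; abel
    have hAG : A g = A G - x • V (A G) := by
      rw [← hAV, ← map_smul, ← map_sub, hGV]
    have hL : CMLap a b x (A g) = Real.exp (-(x * (b - a))) * ∫ t in Icc a b, (A G) t := by
      rw [← CMLap_V hab x (CM_Lpint (A G)), hAG]
      apply CMLap_congr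
      filter_upwards [Lp.coeFn_sub (A G) (x • V (A G)), Lp.coeFn_smul x (V (A G)), hV (A G)] 
        with t h1 h2 h3
      rw [h1, Pi.sub_apply, h2, Pi.smul_apply, h3, smul_eq_mul]
    have hint : ∫ t in Icc a b, (A G) t = c * (∫ t in Icc a b, (A E) t) + ∫ t in Icc a b, (A r) t := by
      rw [hG, map_add, map_smul, ← L1.integral_eq_integral, ← L1.integral_eq_integral, 
        ← L1.integral_eq_integral, L1.integral_add, L1.integral_smul, smul_eq_mul]
    have hfin : CMLap a b x (A g) - m x * CMLap a b x g = 
        Real.exp (-(x * (b - a))) * ∫ t in Icc a b, (A r) t := by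
      rw [hL, hint, hm, hc]; ring
    rw [hfin, abs_mul, Real.abs_exp, mul_comm x (b - a), mul_assoc]
    gcongr
    refine (hI _).trans ((A.le_opNorm _).trans ?_)
    rw [mul_assoc]
    gcongr
    rw [hrdef, L1.norm_of_fun_eq_integral_norm, L1.norm_eq_integral_norm, mul_comm (b - a) x]
    exact CMrem_norm hab hx hg


lemma CMQ_V {a b : ℝ} (hab : a < b) 
    {V : Lp ℝ 1 (volume.restrict (Icc a b)) →L[ℝ] Lp ℝ 1 (volume.restrict (Icc a b))}
    (hV : ∀ f : Lp ℝ 1 (volume.restrict (Icc a b)),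
      (V f : ℝ → ℝ) =ᵐ[volume.restrict (Icc a b)] fun t => ∫ s in a..t, f s) :
    CMQ a b V (fun x => x ^ (-1:ℝ)) := by
  refine ⟨_, CMSm_exp (b - a), ?_⟩
  filter_upwards [eventually_ge_atTop 1] with x hx g
  have hx0 : 0 < x := by linarith
  have hVi : IntegrableOn (fun t => ∫ s in a..t, g s) (Icc a b) :=
    (CM_primcont hab (CM_Lpint g)).integrableOn_Icc
  have h1 := CMLap_V hab x (CM_Lpint g)
  rw [CMLap_sub (CM_Lpint g) (hVi.const_mul x)] at h1
  have h2 : CMLap a b x (fun t => x * ∫ s in a..t, g s) = x * CMLap a b x (fun t => ∫ s in a..t, g s) := by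
    rw [CMLap, CMLap, ← integral_const_mul]; congr 1; ext t; ring
  rw [CMLap_congr (hV g), Real.rpow_neg_one]
  rw [h2] at h1
  have h3 : CMLap a b x (fun t => ∫ s in a..t, g s) - x⁻¹ * CMLap a b x g = 
    - (x⁻¹ * (Real.exp (-(x * (b - a))) * ∫ t in Icc a b, g t)) := by
    rw [← h1]; field_simp; ring
  have hI : |∫ t in Icc a b, g t| ≤ ‖g‖ := by
    rw [L1.norm_eq_integral_norm, ← Real.norm_eq_abs]
    exact norm_integral_le_integral_norm (fun t => g t)
  rw [h3, abs_neg, abs_mul, abs_mul, Real.abs_exp, abs_of_pos (inv_pos.2 hx0), mul_comm x (b - a)]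
  have h4 : x⁻¹ ≤ 1 := inv_le_one_of_one_le₀ hx
  calc _ ≤ 1 * (Real.exp (-((b - a) * x)) * ‖g‖) := by gcongr
    _ = _ := one_mul _

lemma CMQ_half {a b : ℝ} (hab : a < b) {α : ℝ}
    {A B : Lp ℝ 1 (volume.restrict (Icc a b)) →L[ℝ] Lp ℝ 1 (volume.restrict (Icc a b))}
    {m n : ℝ → ℝ} (hA : CMQ a b A m) (hB : CMQ a b B n) (hBB : B.comp B = A) 
    (hAA : CMQ a b (A.comp A) (fun x => x ^ (-(2 * α))))
    (hm : m =O[atTop] fun x : ℝ => x ^ (1:ℝ)) (hn : n =O[atTop] fun x : ℝ => x ^ (1:ℝ)) :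
    CMQ a b A (fun x => x ^ (-α)) := by
  apply hA.subst
  have h1 := (hA.comp hA hm).uniq hab hAA
  have h2 := (hBB ▸ hB.comp hB hn : CMQ a b A _).uniq hab hA
  have h3 : ∀ᶠ x in atTop, |n x * n x - m x| ≤ 1 / 2 * x ^ (-α) := by
    have h4 := h2 ((b - a) / 2) (by linarith)
    have h5 : (fun x => Real.exp (-((b - a) / 2 * x))) =o[atTop] fun x : ℝ => x ^ (-α) := by
      have := isLittleO_exp_neg_mul_rpow_atTop (show 0 < (b - a) / 2 by linarith) (-α)
      simpa using this
    have h6 := (h4.trans_isLittleO h5).bound (show (0:ℝ) < 1 / 2 by norm_num)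
    filter_upwards [h6, eventually_gt_atTop 0] with x h6 hx
    rwa [Real.norm_eq_abs, Real.norm_of_nonneg (Real.rpow_nonneg hx.le _)] at h6
  have hp : (fun x : ℝ => 2 * x ^ α) =O[atTop] fun x : ℝ => x ^ α :=
    (Asymptotics.isBigO_refl _ _).const_mul_left 2
  refine (CMSm.mulpow α h1 hp).of_le ?_
  filter_upwards [h3, eventually_gt_atTop 0] with x h3 hx
  have hpos : 0 < x ^ α := Real.rpow_pos_of_pos hx _
  have hneg : x ^ (-α) = (x ^ α)⁻¹ := Real.rpow_neg hx.le _
  have hsq : x ^ (-(2 * α)) = x ^ (-α) * x ^ (-α) := by rw [← Real.rpow_add hx]; congr 1; ring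
  set p := x ^ (-α) with hpdef
  have hp0 : 0 < p := Real.rpow_pos_of_pos hx _
  have hxp : x ^ α * p = 1 := by rw [hneg]; field_simp
  have h5 : p / 2 ≤ m x + p := by
    have := (abs_le.1 h3).2
    nlinarith [mul_self_nonneg (n x)]
  rw [hsq]
  have h6 : m x * m x - p * p = (m x - p) * (m x + p) := by ring
  rw [h6, abs_mul, abs_mul, abs_mul, abs_of_pos hpos, abs_of_pos (by linarith : 0 < m x + p),
    abs_of_pos (by norm_num : (0:ℝ) < 2)]
  have h7 : 1 ≤ 2 * x ^ α * (m x + p) := by nlinarith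
  calc |m x - p| ≤ |m x - p| * (2 * x ^ α * (m x + p)) := le_mul_of_one_le_right (abs_nonneg _) h7
    _ = _ := by ring

theorem cartwright_mcmullen (a b : ℝ) (hab : a < b)
    (T : ℝ → (Lp ℝ 1 (volume.restrict (Icc a b)) →L[ℝ] Lp ℝ 1 (volume.restrict (Icc a b))))
    (h_interp : ∀ f : Lp ℝ 1 (volume.restrict (Icc a b)),
      (T 1 f : ℝ → ℝ) =ᵐ[volume.restrict (Icc a b)] fun t => ∫ s in a..t, f s)
    (h_index : ∀ α β : ℝ, 0 < α → 0 < β → (T α).comp (T β) = T (α + β))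
    (h_cont : ContinuousOn T (Ioi (0:ℝ))) :
    ∀ α : ℝ, 0 < α → ∀ f : Lp ℝ 1 (volume.restrict (Icc a b)),
      (T α f : ℝ → ℝ) =ᵐ[volume.restrict (Icc a b)]
        fun t => (1 / Real.Gamma α) * ∫ s in a..t, (t - s) ^ (α - 1) * f s := by
  have hcomm : ∀ α, 0 < α → ∀ g, T α (T 1 g) = T 1 (T α g) := by
    intro α hα g
    have h1 := h_index α 1 hα one_pos
    have h2 := h_index 1 α one_pos hα
    rw [add_comm, ← h2] at h1
    exact congrArg (fun S => S g) h1
  have hhalf : ∀ α, 0 < α → CMQ a b (T (2 * α)) (fun x => x ^ (-(2 * α))) → 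
      CMQ a b (T α) (fun x => x ^ (-α)) := by
    intro α hα h
    obtain ⟨m, hm, hA⟩ := CMQ_exists hab h_interp (hcomm α hα)
    obtain ⟨n, hn, hB⟩ := CMQ_exists hab h_interp (hcomm (α / 2) (by linarith))
    refine CMQ_half hab hA hB ?_ ?_ hm hn
    · rw [h_index _ _ (by linarith) (by linarith)]; congr 1; ring
    · rw [h_index _ _ hα hα, ← two_mul]; exact h
  have hpow : ∀ n : ℕ, CMQ a b (T (1 / 2 ^ n)) (fun x => x ^ (-(1 / 2 ^ n : ℝ))) := by
    intro n
    induction n with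
    | zero => simpa using CMQ_V hab h_interp
    | succ n ih =>
      apply hhalf _ (by positivity)
      have : (2 * (1 / 2 ^ (n + 1)) : ℝ) = 1 / 2 ^ n := by rw [pow_succ]; field_simp
      rw [this]; exact ih
  have hdy : ∀ n k : ℕ, CMQ a b (T ((k + 1 : ℕ) / 2 ^ n)) (fun x => x ^ (-((k + 1 : ℕ) / 2 ^ n : ℝ))) := by
    intro n k
    induction k with
    | zero => simpa using hpow n
    | succ k ih =>
      have h1 := ih.comp (hpow n) (Asymptotics.isBigO_refl _ _)
      rw [h_index _ _ (by positivity) (by positivity)] at h1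
      have e : ((k + 1 + 1 : ℕ) / 2 ^ n : ℝ) = (k + 1 : ℕ) / 2 ^ n + 1 / 2 ^ n := by
        push_cast; ring
      rw [e]
      obtain ⟨ε, hε, h2⟩ := h1
      refine ⟨ε, hε, ?_⟩
      filter_upwards [h2, eventually_gt_atTop 0] with x h2 hx g
      rw [neg_add, Real.rpow_add hx]
      exact h2 g
  -- smallness of the error from the kernel side
  have hsmall : ∀ c : ℝ, CMSm (b - a) (fun x => Real.exp (-((x - 1) * (b - a))) * c) := by
    intro c
    have hp : (fun _ : ℝ => Real.exp (b - a) * c) =O[atTop] fun x : ℝ => x ^ (0:ℝ) := by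
      simpa using Asymptotics.isBigO_const_const (Real.exp (b - a) * c) (one_ne_zero : (1:ℝ) ≠ 0) (atTop : Filter ℝ)
    refine (CMSm.mulpow 0 (CMSm_exp (b - a)) hp).of_le (Eventually.of_forall fun x => le_of_eq ?_)
    have : Real.exp (-((x - 1) * (b - a))) = Real.exp (b - a) * Real.exp (-((b - a) * x)) := by
      rw [← Real.exp_add]; congr 1; ring
    rw [this]; congr 1; ring
  have hJ : ∀ α, 0 < α → ∀ f : Lp ℝ 1 (volume.restrict (Icc a b)), 
      IntegrableOn (fun t => (1 / Real.Gamma α) * ∫ s in a..t, (t - s) ^ (α - 1) * f s) (Icc a b) ∧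
      ∀ x, 1 ≤ x → |CMLap a b x (fun t => (1 / Real.Gamma α) * ∫ s in a..t, (t - s) ^ (α - 1) * f s) 
        - x ^ (-α) * CMLap a b x f| ≤ Real.exp (-((x - 1) * (b - a))) * ‖f‖ := by
    intro α hα f
    obtain ⟨h1, h2⟩ := CM_J hab hα (CM_Lpint f)
    refine ⟨h1.const_mul _, fun x hx => ?_⟩
    have h3 := h2 x hx
    have hΓ := Real.Gamma_pos_of_pos hα
    have h4 : CMLap a b x (fun t => (1 / Real.Gamma α) * ∫ s in a..t, (t - s) ^ (α - 1) * f s) = 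
      (1 / Real.Gamma α) * CMLap a b x (fun t => ∫ s in a..t, (t - s) ^ (α - 1) * f s) := by
      rw [CMLap, CMLap, ← integral_const_mul]; congr 1; ext t; ring
    rw [h4, L1.norm_eq_integral_norm]
    rw [mul_assoc, mul_comm (Real.Gamma α), mul_comm (Real.Gamma α), ← mul_assoc] at h3
    set P := CMLap a b x (fun t => ∫ s in a..t, (t - s) ^ (α - 1) * f s)
    have h5 : (1 / Real.Gamma α) * P - x ^ (-α) * CMLap a b x f = 
      (P - x ^ (-α) * CMLap a b x f * Real.Gamma α) / Real.Gamma α := by field_simp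
    rw [h5, abs_div, abs_of_pos hΓ, div_le_iff₀ hΓ]
    refine le_trans ?_ (h3.trans (le_of_eq ?_))
    · apply le_of_eq; congr 1
    · ring
  -- conclusion from a Laplace estimate
  have hconc : ∀ α, 0 < α → ∀ f : Lp ℝ 1 (volume.restrict (Icc a b)), 
      CMSm (b - a) (fun x => CMLap a b x (T α f) - x ^ (-α) * CMLap a b x f) →
      (T α f : ℝ → ℝ) =ᵐ[volume.restrict (Icc a b)]
        fun t => (1 / Real.Gamma α) * ∫ s in a..t, (t - s) ^ (α - 1) * f s := by
    intro α hα f h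
    obtain ⟨h1, h2⟩ := hJ α hα f
    have h3 := CM_unique hab ((CM_Lpint (T α f)).sub h1) ?_
    · filter_upwards [h3] with t ht
      exact sub_eq_zero.1 ht
    · have h4 : CMSm (b - a) (fun x => |CMLap a b x (T α f) - x ^ (-α) * CMLap a b x f|) := 
        h.of_le (by simp)
      refine (h4.add (hsmall ‖f‖)).of_le ?_
      filter_upwards [eventually_ge_atTop 1] with x hx
      have h5 := h2 x hx
      have h6 := CMLap_sub (x := x) (CM_Lpint (T α f)) h1
      refine le_trans ?_ (le_abs_self _)
      change |CMLap a b x (fun t => (T α f) t - _)| ≤ _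
      rw [h6]
      have h7 := abs_sub_le (CMLap a b x (T α f)) (x ^ (-α) * CMLap a b x f) 
        (CMLap a b x (fun t => (1 / Real.Gamma α) * ∫ s in a..t, (t - s) ^ (α - 1) * f s))
      rw [abs_sub_comm (x ^ (-α) * CMLap a b x f)] at h7
      linarith
  -- uniform estimate at dyadic orders
  have hunif : ∀ n k : ℕ, ∀ f : Lp ℝ 1 (volume.restrict (Icc a b)), ∀ x, 1 ≤ x → 
      |CMLap a b x (T ((k + 1 : ℕ) / 2 ^ n) f) - x ^ (-((k + 1 : ℕ) / 2 ^ n : ℝ)) * CMLap a b x f| ≤ 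
       Real.exp (-((x - 1) * (b - a))) * ‖f‖ := by
    intro n k f x hx
    have hpos : (0:ℝ) < (k + 1 : ℕ) / 2 ^ n := by positivity
    have h1 := hconc _ hpos f ?_
    · rw [CMLap_congr h1]
      exact (hJ _ hpos f).2 x hx
    · obtain ⟨ε, hε, h2⟩ := hdy n k
      have hp : (fun _ : ℝ => ‖f‖) =O[atTop] fun x : ℝ => x ^ (0:ℝ) := by
        simpa using Asymptotics.isBigO_const_const (‖f‖) (one_ne_zero : (1:ℝ) ≠ 0) (atTop : Filter ℝ)
      refine (CMSm.mulpow 0 hε hp).of_le ?_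
      filter_upwards [h2] with x h2
      refine (h2 f).trans ?_
      rw [mul_comm]; exact le_abs_self _
  intro α hα f
  apply hconc α hα f
  refine (hsmall ‖f‖).of_le ?_
  filter_upwards [eventually_ge_atTop 1] with x hx
  refine le_trans ?_ (le_abs_self _)
  set q : ℕ → ℝ := fun n => (⌊α * 2 ^ n⌋₊ + 1 : ℕ) / 2 ^ n with hq
  have hqlim : Tendsto q atTop (𝓝 α) := by
    have h2 : Tendsto (fun n : ℕ => α + (1 / 2 : ℝ) ^ n) atTop (𝓝 α) := by
      simpa using (tendsto_pow_atTop_nhds_zero_of_lt_one (by norm_num : (0:ℝ) ≤ 1 / 2) 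
        (by norm_num)).const_add α
    refine tendsto_of_tendsto_of_tendsto_of_le_of_le tendsto_const_nhds h2 ?_ ?_
    · intro n
      simp only [hq]
      rw [le_div_iff₀ (by positivity)]
      push_cast
      exact (Nat.lt_floor_add_one _).le
    · intro n
      simp only [hq]
      rw [div_le_iff₀ (by positivity), add_mul, ← mul_pow]
      push_cast
      have := Nat.floor_le (show 0 ≤ α * 2 ^ n by positivity)
      norm_num
      exact this
  have hTlim : Tendsto (fun n => T (q n) f) atTop (𝓝 (T α f)) := by
    have h1 : Tendsto T (𝓝 α) (𝓝 (T α)) := h_cont.continuousAt (Ioi_mem_nhds hα)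
    exact (((ContinuousLinearMap.apply ℝ _ f).continuous.tendsto (T α)).comp h1).comp hqlim
  have hLlim : Tendsto (fun n => CMLap a b x (T (q n) f)) atTop (𝓝 (CMLap a b x (T α f))) := by
    rw [tendsto_iff_norm_sub_tendsto_zero] at hTlim ⊢
    refine squeeze_zero (fun _ => norm_nonneg _) (fun n => ?_) hTlim
    rw [← CMLap_sub (CM_Lpint _) (CM_Lpint _), Real.norm_eq_abs]
    refine le_trans (le_of_eq ?_) (CMLap_le (by linarith : 0 ≤ x) (T (q n) f - T α f))
    congr 1
    apply CMLap_congr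
    exact (Lp.coeFn_sub _ _).symm
  have hplim : Tendsto (fun n => x ^ (-(q n))) atTop (𝓝 (x ^ (-α))) := 
    ((Real.continuous_const_rpow (show x ≠ 0 by positivity)).tendsto (-α)).comp hqlim.neg
  exact le_of_tendsto (hLlim.sub (hplim.mul_const _)).abs 
    (Eventually.of_forall fun n => hunif n _ f x hx)
end

section
/- For every α > 0, the Riemann–Liouville fractional integral operator I^α : L¹[0,b] → L¹[0,b] is injective: if f, g ∈ L¹[0,b] satisfy I^α f = I^α g almost everywhere on [0,b], then f = g almost everywhere on [0,b]. -/
open MeasureTheory Set Filter Topology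

open Classical in
/-- Riemann–Liouville fractional integral of order `α` with base point `0`;
`RL 0` is the identity operator. -/
noncomputable def RL (α : ℝ) (f : ℝ → ℝ) : ℝ → ℝ := fun t =>
  if α = 0 then f t
  else (1 / Real.Gamma α) * ∫ s in (0:ℝ)..t, (t - s) ^ (α - 1) * f s

lemma beta_aux (a c : ℝ) (ha : 0 < a) (hc : 0 < c) :
    ∃ B : ℝ, 0 < B ∧ ∀ s x : ℝ, s < x →
      IntegrableOn (fun t => (x - t) ^ (c - 1) * (t - s) ^ (a - 1)) (Ioo s x) ∧
      ∫ t in Ioo s x, (x - t) ^ (c - 1) * (t - s) ^ (a - 1) = (x - s) ^ (a + c - 1) * B := by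
  set K : ℝ → ℝ := fun r => (1 - r) ^ (c - 1) * r ^ (a - 1) with hK
  have hKi : IntervalIntegrable K volume 0 1 := by
    have h := (Complex.betaIntegral_convergent (u := a) (v := c) (by simpa) (by simpa)).norm
    refine h.congr_ae ?_
    rw [uIoc_of_le zero_le_one, ← restrict_Ioo_eq_restrict_Ioc]
    filter_upwards [ae_restrict_mem measurableSet_Ioo] with r hr
    have h1 : (1 - (r:ℂ)) = ((1 - r : ℝ) : ℂ) := by push_cast; rfl
    rw [norm_mul, h1, Complex.norm_cpow_eq_rpow_re_of_pos hr.1,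
      Complex.norm_cpow_eq_rpow_re_of_pos (by linarith [hr.2])]
    simp [hK, mul_comm]
  refine ⟨∫ r in (0:ℝ)..1, K r, ?_, ?_⟩
  · apply intervalIntegral.intervalIntegral_pos_of_pos_on hKi _ zero_lt_one
    intro r hr
    exact mul_pos (Real.rpow_pos_of_pos (by linarith [hr.2]) _) (Real.rpow_pos_of_pos hr.1 _)
  · intro s x hsx
    set d := x - s with hd
    have hd0 : 0 < d := by simp [hd, hsx]
    have e : ∀ t ∈ Ioo s x, (x - t) ^ (c - 1) * (t - s) ^ (a - 1)
        = d ^ (a + c - 2) * K (t / d - s / d) := by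
      intro t ht
      have h1 : x - t = d * (1 - (t / d - s / d)) := by field_simp; rw [hd]; ring
      have h2 : t - s = d * (t / d - s / d) := by field_simp
      have h3 : 0 ≤ t / d - s / d := by
        rw [← sub_div]; exact div_nonneg (by linarith [ht.1]) hd0.le
      have h4 : 0 ≤ 1 - (t / d - s / d) := by
        by_contra hh
        have : x - t < 0 := by rw [h1]; exact mul_neg_of_pos_of_neg hd0 (by linarith)
        linarith [ht.2]
      rw [h1, h2, Real.mul_rpow hd0.le h4, Real.mul_rpow hd0.le h3, hK,
        show a + c - 2 = (c - 1) + (a - 1) by ring, Real.rpow_add hd0]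
      ring
    have hI : IntervalIntegrable (fun t => K (t / d - s / d)) volume s x := by
      have h1 := hKi.comp_sub_right (s / d)
      have h2 := h1.comp_mul_right (c := d⁻¹)
      have e1 : (0 + s / d) / d⁻¹ = s := by field_simp; ring
      have e2 : (1 + s / d) / d⁻¹ = x := by field_simp; rw [hd]; ring
      rw [e1, e2] at h2
      simpa [div_eq_mul_inv] using h2
    have hI2 : IntegrableOn (fun t => K (t / d - s / d)) (Ioo s x) :=
      ((intervalIntegrable_iff_integrableOn_Ioo_of_le hsx.le).1 hI)
    refine ⟨(hI2.const_mul (d ^ (a + c - 2))).congr ?_, ?_⟩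
    · filter_upwards [ae_restrict_mem measurableSet_Ioo] with t ht
      exact (e t ht).symm
    · rw [setIntegral_congr_fun measurableSet_Ioo e, integral_const_mul,
        ← integral_Ioc_eq_integral_Ioo, ← intervalIntegral.integral_of_le hsx.le,
        intervalIntegral.integral_comp_div_sub _ hd0.ne']
      have e2 : x / d - s / d = 1 := by rw [← sub_div, ← hd, div_self hd0.ne']
      rw [sub_self, e2, smul_eq_mul, ← mul_assoc, ← Real.rpow_add_one hd0.ne']
      congr 2; ring

/-- the triangular kernel -/
noncomputable def triKer (a c x t s : ℝ) : ℝ :=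
  if s < t then (x - t) ^ (c - 1) * (t - s) ^ (a - 1) else 0

lemma ker_meas (a c x : ℝ) : Measurable (fun p : ℝ × ℝ => triKer a c x p.1 p.2) := by
  unfold triKer
  refine Measurable.ite (measurableSet_lt measurable_snd measurable_fst) ?_ measurable_const
  fun_prop

lemma ker_s (a c x s : ℝ) (hs : 0 < s) :
    (fun t => triKer a c x t s) = (Ioi s).indicator (fun t => (x - t) ^ (c - 1) * (t - s) ^ (a - 1)) := by
  ext t; simp [triKer, indicator]

lemma ker_t (a c x t : ℝ) (u : ℝ → ℝ) :
    (fun s => triKer a c x t s * u s)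
      = (Iio t).indicator (fun s => (x - t) ^ (c - 1) * ((t - s) ^ (a - 1) * u s)) := by
  ext s; simp only [triKer, indicator, mem_Iio]; split_ifs <;> ring

lemma ker_all (a c : ℝ) (ha : 0 < a) (hc : 0 < c) (hac : 1 ≤ a + c) :
    ∃ B : ℝ, 0 < B ∧ ∀ (x : ℝ) (u : ℝ → ℝ), 0 < x → IntegrableOn u (Ioo 0 x) →
      Integrable (fun p : ℝ × ℝ => triKer a c x p.1 p.2 * u p.2)
        ((volume.restrict (Ioo 0 x)).prod (volume.restrict (Ioo 0 x))) ∧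
      ∫ t in Ioo 0 x, (x - t) ^ (c - 1) * ∫ s in Ioo 0 t, (t - s) ^ (a - 1) * u s
        = B * ∫ s in Ioo 0 x, (x - s) ^ (a + c - 1) * u s := by
  obtain ⟨B, hB, hb⟩ := beta_aux a c ha hc
  refine ⟨B, hB, fun x u hx hu => ?_⟩
  have k1 : ∀ s ∈ Ioo 0 x, Integrable (fun t => triKer a c x t s) (volume.restrict (Ioo 0 x)) ∧
      ∫ t in Ioo 0 x, triKer a c x t s = (x - s) ^ (a + c - 1) * B := by
    intro s hs
    have hI : Ioi s ∩ Ioo 0 x = Ioo s x := by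
      ext t; simp only [mem_inter_iff, mem_Ioi, mem_Ioo]; constructor
      · rintro ⟨h1, h2, h3⟩; exact ⟨h1, h3⟩
      · rintro ⟨h1, h3⟩; exact ⟨h1, hs.1.trans h1, h3⟩
    obtain ⟨h1, h2⟩ := hb s x hs.2
    rw [ker_s a c x s hs.1]
    constructor
    · rw [integrable_indicator_iff measurableSet_Ioi, IntegrableOn,
        Measure.restrict_restrict measurableSet_Ioi, hI]
      exact h1
    · rw [integral_indicator measurableSet_Ioi, Measure.restrict_restrict measurableSet_Ioi, hI, h2]
  have kn : ∀ s, ∀ t ∈ Ioo 0 x, 0 ≤ triKer a c x t s := by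
    intro s t ht
    unfold triKer
    split_ifs with h
    · exact mul_nonneg (Real.rpow_nonneg (by linarith [ht.2]) _) (Real.rpow_nonneg (by linarith) _)
    · exact le_rfl
  have hF : Integrable (fun p : ℝ × ℝ => triKer a c x p.1 p.2 * u p.2)
        ((volume.restrict (Ioo 0 x)).prod (volume.restrict (Ioo 0 x))) := by
    have hm : AEStronglyMeasurable (fun p : ℝ × ℝ => triKer a c x p.1 p.2 * u p.2)
        ((volume.restrict (Ioo 0 x)).prod (volume.restrict (Ioo 0 x))) :=
      (ker_meas a c x).aestronglyMeasurable.mul hu.aestronglyMeasurable.comp_snd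
    rw [integrable_prod_iff' hm]
    constructor
    · filter_upwards [ae_restrict_mem measurableSet_Ioo] with s hs
      exact (k1 s hs).1.mul_const _
    · have hcont : ContinuousOn (fun s => (x - s) ^ (a + c - 1)) (Icc 0 x) := by
        apply Continuous.continuousOn
        exact (continuous_const.sub continuous_id).rpow_const (fun _ => Or.inr (by linarith))
      have hu' : IntegrableOn u (Icc 0 x) := by rwa [integrableOn_Icc_iff_integrableOn_Ioo]
      have h3 : IntegrableOn (fun s => (x - s) ^ (a + c - 1) * ‖u s‖) (Ioo 0 x) :=
        (IntegrableOn.continuousOn_mul hcont hu'.norm isCompact_Icc).mono_set Ioo_subset_Icc_self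
      refine (h3.const_mul B).congr ?_
      filter_upwards [ae_restrict_mem measurableSet_Ioo] with s hs
      have : ∫ t in Ioo 0 x, ‖triKer a c x t s * u s‖ = ∫ t in Ioo 0 x, triKer a c x t s * ‖u s‖ := by
        refine setIntegral_congr_fun measurableSet_Ioo fun t ht => ?_
        simp only [norm_mul]
        rw [Real.norm_of_nonneg (kn s t ht)]
      simp only [this]
      rw [integral_mul_const, (k1 s hs).2]; ring
  refine ⟨hF, ?_⟩
  have hsw := integral_integral_swap (f := fun t s => triKer a c x t s * u s) hF
  have hL : ∫ t in Ioo 0 x, ∫ s in Ioo 0 x, triKer a c x t s * u s =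
      ∫ t in Ioo 0 x, (x - t) ^ (c - 1) * ∫ s in Ioo 0 t, (t - s) ^ (a - 1) * u s := by
    refine setIntegral_congr_fun measurableSet_Ioo fun t ht => ?_
    have hI : Iio t ∩ Ioo 0 x = Ioo 0 t := by
      ext s; simp only [mem_inter_iff, mem_Iio, mem_Ioo]; constructor
      · rintro ⟨h1, h2, h3⟩; exact ⟨h2, h1⟩
      · rintro ⟨h1, h3⟩; exact ⟨h3, h1, h3.trans ht.2⟩
    try simp only
    rw [ker_t, integral_indicator measurableSet_Iio, Measure.restrict_restrict measurableSet_Iio,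
      hI, integral_const_mul]
  have hR : ∫ s in Ioo 0 x, ∫ t in Ioo 0 x, triKer a c x t s * u s =
      B * ∫ s in Ioo 0 x, (x - s) ^ (a + c - 1) * u s := by
    rw [← integral_const_mul]
    refine setIntegral_congr_fun measurableSet_Ioo fun s hs => ?_
    try simp only
    rw [integral_mul_const, (k1 s hs).2]; ring
  rw [← hL, ← hR, hsw]

/-- the unnormalised fractional integral -/
noncomputable def JJ (a : ℝ) (u : ℝ → ℝ) (t : ℝ) : ℝ := ∫ s in Ioo 0 t, (t - s) ^ (a - 1) * u s

lemma JJ_facts (a b : ℝ) (ha : 0 < a) (hb : 0 < b) (u : ℝ → ℝ) (hu : IntegrableOn u (Ioo 0 b)) :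
    IntegrableOn (JJ a u) (Ioo 0 b) ∧
    ∀ᵐ t ∂(volume.restrict (Ioo 0 b)), IntegrableOn (fun s => (t - s) ^ (a - 1) * u s) (Ioo 0 t) := by
  obtain ⟨B, hB, h⟩ := ker_all a 1 ha one_pos (by linarith)
  have hF := (h b u hb hu).1
  have hI : ∀ t ∈ Ioo 0 b, Iio t ∩ Ioo 0 b = Ioo 0 t := by
    intro t ht
    ext s; simp only [mem_inter_iff, mem_Iio, mem_Ioo]; constructor
    · rintro ⟨h1, h2, h3⟩; exact ⟨h2, h1⟩
    · rintro ⟨h1, h3⟩; exact ⟨h3, h1, h3.trans ht.2⟩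
  constructor
  · refine hF.integral_prod_left.congr ?_
    filter_upwards [ae_restrict_mem measurableSet_Ioo] with t ht
    try simp only
    rw [ker_t, integral_indicator measurableSet_Iio, Measure.restrict_restrict measurableSet_Iio,
      hI t ht, integral_const_mul]
    simp [JJ]
  · filter_upwards [ae_restrict_mem measurableSet_Ioo, hF.prod_right_ae] with t ht h2
    try simp only at h2
    rw [ker_t, integrable_indicator_iff measurableSet_Iio, IntegrableOn,
      Measure.restrict_restrict measurableSet_Iio, hI t ht] at h2
    simpa [IntegrableOn] using h2

lemma zero_of_prim (b : ℝ) (hb : 0 < b) (w : ℝ → ℝ) (hw : IntegrableOn w (Ioo 0 b))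
    (h : ∀ᵐ x ∂(volume.restrict (Ioo 0 b)), ∫ t in Ioo 0 x, w t = 0) :
    ∀ᵐ x ∂(volume.restrict (Ioo 0 b)), w x = 0 := by
  have hwI : IntervalIntegrable w volume 0 b :=
    (intervalIntegrable_iff_integrableOn_Ioo_of_le hb.le).2 hw
  have hc : ContinuousOn (fun x => ∫ t in (0:ℝ)..x, w t) (Ioo 0 b) := by
    have : IntegrableOn w (uIcc 0 b) := by
      rw [uIcc_of_le hb.le]; rwa [integrableOn_Icc_iff_integrableOn_Ioo]
    refine (intervalIntegral.continuousOn_primitive_interval this).mono ?_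
    rw [uIcc_of_le hb.le]; exact Ioo_subset_Icc_self
  have hz : EqOn (fun x => ∫ t in (0:ℝ)..x, w t) (fun _ => 0) (Ioo 0 b) := by
    refine Measure.eqOn_open_of_ae_eq (μ := volume) ?_ isOpen_Ioo hc continuousOn_const
    filter_upwards [h, ae_restrict_mem measurableSet_Ioo] with x hx hx2
    rw [intervalIntegral.integral_of_le hx2.1.le, integral_Ioc_eq_integral_Ioo, hx]
  rw [ae_restrict_iff' measurableSet_Ioo]
  filter_upwards [hwI.ae_hasDerivAt_integral] with x hx hx2
  have h1 := hx (by rw [uIcc_of_le hb.le]; exact Ioo_subset_Icc_self hx2) 0 left_mem_uIcc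
  have h2 : HasDerivAt (fun x => ∫ t in (0:ℝ)..x, w t) 0 x :=
    (hasDerivAt_const x (0:ℝ)).congr_of_eventuallyEq
      (hz.eventuallyEq_of_mem (isOpen_Ioo.mem_nhds hx2))
  exact h1.unique h2

lemma JJ_up (a c b : ℝ) (ha : 0 < a) (hc : 0 < c) (hac : 1 ≤ a + c) (u : ℝ → ℝ)
    (hu : IntegrableOn u (Ioo 0 b)) (h : ∀ᵐ x ∂(volume.restrict (Ioo 0 b)), JJ a u x = 0) :
    ∀ᵐ x ∂(volume.restrict (Ioo 0 b)), JJ (a + c) u x = 0 := by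
  obtain ⟨B, hB, hh⟩ := ker_all a c ha hc hac
  filter_upwards [ae_restrict_mem measurableSet_Ioo] with x hx
  have hs : Ioo 0 x ⊆ Ioo 0 b := Ioo_subset_Ioo_right hx.2.le
  have h1 := (hh x u hx.1 (hu.mono_set hs)).2
  have h2 : ∫ t in Ioo 0 x, (x - t) ^ (c - 1) * ∫ s in Ioo 0 t, (t - s) ^ (a - 1) * u s = 0 := by
    apply integral_eq_zero_of_ae
    filter_upwards [ae_restrict_of_ae_restrict_of_subset hs h] with t ht
    rw [JJ] at ht
    simp [ht]
  rw [h2] at h1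
  exact (mul_eq_zero.1 h1.symm).resolve_left hB.ne'

lemma JJ_down (a b : ℝ) (ha : 0 < a) (hb : 0 < b) (u : ℝ → ℝ)
    (hu : IntegrableOn u (Ioo 0 b)) (h : ∀ᵐ x ∂(volume.restrict (Ioo 0 b)), JJ (a + 1) u x = 0) :
    ∀ᵐ x ∂(volume.restrict (Ioo 0 b)), JJ a u x = 0 := by
  obtain ⟨B, hB, hh⟩ := ker_all a 1 ha one_pos (by linarith)
  refine zero_of_prim b hb _ (JJ_facts a b ha hb u hu).1 ?_
  filter_upwards [ae_restrict_mem measurableSet_Ioo, h] with x hx hx2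
  have hs : Ioo 0 x ⊆ Ioo 0 b := Ioo_subset_Ioo_right hx.2.le
  have h1 := (hh x u hx.1 (hu.mono_set hs)).2
  rw [JJ] at hx2
  rw [hx2] at h1
  simpa [JJ] using h1

lemma JJ_inj (a b : ℝ) (ha : 0 < a) (hb : 0 < b) (u : ℝ → ℝ)
    (hu : IntegrableOn u (Ioo 0 b)) (h : ∀ᵐ x ∂(volume.restrict (Ioo 0 b)), JJ a u x = 0) :
    ∀ᵐ x ∂(volume.restrict (Ioo 0 b)), u x = 0 := by
  obtain ⟨n, hn⟩ := exists_nat_gt a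
  have h1 : ∀ᵐ x ∂(volume.restrict (Ioo 0 b)), JJ ((n:ℝ) + 1) u x = 0 := by
    have := JJ_up a (n + 1 - a) b ha (by linarith) (by linarith) u hu h
    simpa using this
  have key : ∀ m : ℕ, (∀ᵐ x ∂(volume.restrict (Ioo 0 b)), JJ ((m:ℝ) + 1) u x = 0) →
      ∀ᵐ x ∂(volume.restrict (Ioo 0 b)), JJ 1 u x = 0 := by
    intro m
    induction m with
    | zero => intro h; simpa using h
    | succ k ih =>
      intro h
      refine ih (JJ_down ((k:ℝ) + 1) b (by positivity) hb u hu ?_)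
      simpa using h
  refine zero_of_prim b hb u hu ?_
  simpa [JJ] using key n h1

theorem RL_injective (b : ℝ) (hb : 0 < b) (α : ℝ) (hα : 0 < α) (f g : ℝ → ℝ)
    (hf : IntegrableOn f (Set.Icc 0 b) volume) (hg : IntegrableOn g (Set.Icc 0 b) volume)
    (h : RL α f =ᵐ[volume.restrict (Set.Icc 0 b)] RL α g) :
    f =ᵐ[volume.restrict (Set.Icc 0 b)] g := by
  rw [← restrict_Ioo_eq_restrict_Icc] at h ⊢
  have hf' := hf.mono_set Ioo_subset_Icc_self
  have hg' := hg.mono_set Ioo_subset_Icc_self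
  have hfg : IntegrableOn (fun s => f s - g s) (Ioo 0 b) := hf'.sub hg'
  have := JJ_inj α b hα hb _ hfg ?_
  · filter_upwards [this] with x hx
    linarith
  filter_upwards [h, ae_restrict_mem measurableSet_Ioo, (JJ_facts α b hα hb f hf').2,
    (JJ_facts α b hα hb g hg').2] with t ht ht2 h1 h2
  simp only [RL, hα.ne', if_false] at ht
  have hG := (Real.Gamma_pos_of_pos hα)
  have ht := mul_left_cancel₀ (by positivity) ht
  rw [intervalIntegral.integral_of_le ht2.1.le, intervalIntegral.integral_of_le ht2.1.le,
    integral_Ioc_eq_integral_Ioo, integral_Ioc_eq_integral_Ioo] at ht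
  simp only [JJ, mul_sub]
  rw [integral_sub h1 h2, ht, sub_self]
end

section
/- For every f ∈ L¹[0,b] and every α ≥ 1, the function I^α f is absolutely continuous on [0,b], i.e. there exists φ ∈ L¹[0,b] such that I^α f(t) = I^α f(0) + ∫₀^t φ(s) ds for all t ∈ [0,b]; moreover I^α f(0) = 0. -/
open MeasureTheory Set Filter Topology

theorem RL_aux (b β : ℝ) (hb : 0 < b) (hβ : 0 < β) (f : ℝ → ℝ)
    (hf : IntegrableOn f (Set.Icc 0 b) volume) :
    ∃ φ : ℝ → ℝ, Integrable φ volume ∧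
      ∀ t ∈ Set.Icc (0:ℝ) b, ∫ s in (0:ℝ)..t, (t - s) ^ β * f s = ∫ s in (0:ℝ)..t, φ s := by
  set F : ℝ → ℝ := (Set.Ioc 0 b).indicator f with hFdef
  set K : ℝ → ℝ := (Set.Ioc 0 b).indicator (fun x => β * x ^ (β - 1)) with hKdef
  have hF : Integrable F volume :=
    (integrable_indicator_iff measurableSet_Ioc).2 (hf.mono_set Ioc_subset_Icc_self)
  have hK : Integrable K volume := by
    refine (integrable_indicator_iff measurableSet_Ioc).2 ?_
    have := (intervalIntegral.intervalIntegrable_rpow' (a := 0) (b := b) (r := β - 1)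
      (by linarith)).const_mul β
    exact (intervalIntegrable_iff_integrableOn_Ioc_of_le hb.le).1 this
  have hP : Integrable (fun p : ℝ × ℝ => F p.2 * K (p.1 - p.2)) (volume.prod volume) := by
    simpa using hF.convolution_integrand (ContinuousLinearMap.mul ℝ ℝ) hK
  refine ⟨fun u => ∫ s, F s * K (u - s), hP.integral_prod_left, ?_⟩
  rintro t ⟨ht0, htb⟩
  have hinner : ∀ s, ∫ u in Set.Ioc 0 t, F s * K (u - s)
      = (Set.Ioc 0 t).indicator (fun s => (t - s) ^ β * f s) s := by
    intro s
    rw [integral_const_mul]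
    by_cases hs : s ∈ Set.Ioc 0 b
    · have e1 : ∫ u in Set.Ioc 0 t, K (u - s) = ∫ x in Set.Ioc (-s) (t - s), K x := by
        rw [← intervalIntegral.integral_of_le ht0,
          intervalIntegral.integral_comp_sub_right (fun x => K x) s,
          intervalIntegral.integral_of_le (by linarith), zero_sub]
      have e2 : Set.Ioc (-s) (t - s) ∩ Set.Ioc 0 b = Set.Ioc 0 (t - s) := by
        ext x
        simp only [Set.mem_inter_iff, Set.mem_Ioc] at hs ⊢
        constructor
        · rintro ⟨⟨_, _⟩, _, _⟩; constructor <;> linarith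
        · rintro ⟨_, _⟩; refine ⟨⟨?_, ?_⟩, ?_, ?_⟩ <;> linarith [hs.1]
      rw [e1, hKdef, setIntegral_indicator measurableSet_Ioc, e2]
      have hFs : F s = f s := Set.indicator_of_mem hs f
      by_cases hst : s ≤ t
      · rw [← intervalIntegral.integral_of_le (by linarith),
          intervalIntegral.integral_const_mul, integral_rpow (Or.inl (by linarith)), hFs,
          Set.indicator_of_mem (show s ∈ Set.Ioc 0 t from ⟨hs.1, hst⟩)]
        rw [sub_add_cancel, Real.zero_rpow hβ.ne']
        field_simp
        ring
      · rw [Set.Ioc_eq_empty (by linarith),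
          Set.indicator_of_notMem (fun h : s ∈ Set.Ioc 0 t => hst h.2)]
        simp
    · rw [Set.indicator_of_notMem (fun h : s ∈ Set.Ioc 0 t => hs ⟨h.1, h.2.trans htb⟩)]
      rw [hFdef, Set.indicator_of_notMem hs, zero_mul]
  rw [intervalIntegral.integral_of_le ht0, intervalIntegral.integral_of_le ht0,
    integral_integral_swap]
  · simp_rw [hinner]
    rw [integral_indicator measurableSet_Ioc]
  · have : (volume.restrict (Set.Ioc 0 t)).prod (volume : Measure ℝ)
        = (volume.prod volume).restrict (Set.Ioc 0 t ×ˢ Set.univ) := by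
      rw [← Measure.prod_restrict, Measure.restrict_univ]
    rw [this]
    exact hP.integrableOn

/-- For `f ∈ L¹[0,b]` and `α ≥ 1`, `I^α f` is absolutely continuous on `[0,b]`
and `I^α f(0) = 0`. -/
theorem RL_absolutelyContinuous (b : ℝ) (hb : 0 < b) (α : ℝ) (hα : 1 ≤ α) (f : ℝ → ℝ)
    (hf : IntegrableOn f (Set.Icc 0 b) volume) :
    (∃ φ : ℝ → ℝ, IntegrableOn φ (Set.Icc 0 b) volume ∧
      ∀ t ∈ Set.Icc (0:ℝ) b, RL α f t = RL α f 0 + ∫ s in (0:ℝ)..t, φ s) ∧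
    RL α f 0 = 0 := by
  have hα0 : α ≠ 0 := by linarith
  have h0 : RL α f 0 = 0 := by simp [RL, hα0]
  refine ⟨?_, h0⟩
  rw [h0]
  rcases hα.eq_or_lt with h | h
  · subst h
    refine ⟨f, hf, fun t _ => ?_⟩
    simp [RL]
  · obtain ⟨φ, h1, h2⟩ := RL_aux b (α - 1) hb (by linarith) f hf
    refine ⟨fun s => (1 / Real.Gamma α) * φ s, (h1.const_mul _).integrableOn, fun t ht => ?_⟩
    rw [intervalIntegral.integral_const_mul, ← h2 t ht]
    simp [RL, hα0]
end

section
/- For every α > 0, the space X_α of functions with summable fractional derivative of order α decomposes as the direct sum of the span of {t^{α−⌈α⌉}, …, t^{α−2}, t^{α−1}} and I^α(L¹[0,b]): every f ∈ X_α can be written in exactly one way as f(t) = a₀ t^{α−⌈α⌉} + ⋯ + a_{⌈α⌉−1} t^{α−1} + I^α φ(t) with a₀,…,a_{⌈α⌉−1} ∈ ℝ and φ ∈ L¹[0,b], and conversely every function of this form belongs to X_α. -/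
open MeasureTheory Set Filter Topology

/-- `g ∈ AC[0,b]`: `g t = g 0 + ∫₀ᵗ φ` for some `φ ∈ L¹[0,b]`. -/
def MemAC (b : ℝ) (g : ℝ → ℝ) : Prop :=
  ∃ φ : ℝ → ℝ, IntegrableOn φ (Set.Icc 0 b) volume ∧
    ∀ t ∈ Set.Icc (0:ℝ) b, g t = g 0 + ∫ s in (0:ℝ)..t, φ s

/-- `g ∈ AC^n[0,b]`: `g ∈ C^{n-1}[0,b]` and `D^{n-1} g ∈ AC[0,b]`. -/
def MemACn (b : ℝ) (n : ℕ) (g : ℝ → ℝ) : Prop :=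
  ContDiffOn ℝ (n - 1 : ℕ) g (Set.Icc 0 b) ∧
    MemAC b (iteratedDerivWithin (n - 1) g (Set.Icc 0 b))

/-- `f ∈ X_α`, the space of functions with summable fractional derivative of order `α`:
`f ∈ L¹[0,b]` and (for `α ≠ 0`) `I^{⌈α⌉-α} f ∈ AC^{⌈α⌉}[0,b]`
(as an element of `L¹`, i.e. it has an `AC^{⌈α⌉}` representative); `X_0 = L¹[0,b]`. -/
def MemX (b : ℝ) (α : ℝ) (f : ℝ → ℝ) : Prop :=
  IntegrableOn f (Set.Icc 0 b) volume ∧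
    (α ≠ 0 → ∃ g : ℝ → ℝ,
      g =ᵐ[volume.restrict (Set.Icc 0 b)] RL ((⌈α⌉₊ : ℝ) - α) f ∧ MemACn b ⌈α⌉₊ g)

open scoped Convolution

noncomputable def eK (γ : ℝ) : ℝ → ℝ := fun t => t ^ (γ - 1) / Real.Gamma γ

noncomputable def trK (b : ℝ) (f : ℝ → ℝ) : ℝ → ℝ := (Ioc (0:ℝ) b).indicator f

noncomputable def cv (f g : ℝ → ℝ) : ℝ → ℝ := f ⋆[ContinuousLinearMap.mul ℝ ℝ, volume] g

lemma cv_apply (f g : ℝ → ℝ) (t : ℝ) : cv f g t = ∫ s, f s * g (t - s) := rfl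

lemma eK_int {b γ : ℝ} (hb : 0 < b) (hγ : 0 < γ) : IntegrableOn (eK γ) (Ioc 0 b) volume := by
  have := (intervalIntegral.intervalIntegrable_rpow' (a := 0) (b := b) (r := γ - 1) (by linarith))
  rw [intervalIntegrable_iff_integrableOn_Ioc_of_le hb.le] at this
  exact this.div_const _

lemma trK_int {b : ℝ} {f : ℝ → ℝ} (hf : IntegrableOn f (Icc 0 b) volume) :
    Integrable (trK b f) volume := by
  rw [trK, integrable_indicator_iff measurableSet_Ioc]
  exact hf.mono_set Ioc_subset_Icc_self

lemma eK_int' {b γ : ℝ} (hb : 0 < b) (hγ : 0 < γ) : IntegrableOn (eK γ) (Icc 0 b) volume := by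
  rw [integrableOn_Icc_iff_integrableOn_Ioc]; exact eK_int hb hγ

lemma cv_int {f g : ℝ → ℝ} (hf : Integrable f volume) (hg : Integrable g volume) :
    Integrable (cv f g) volume := hf.integrable_convolution _ hg

lemma RL_eq_cv {b γ : ℝ} (hγ : 0 < γ) (f : ℝ → ℝ) {t : ℝ} (ht : t ∈ Icc 0 b) :
    RL γ f t = cv (trK b f) (trK b (eK γ)) t := by
  rw [cv_apply, RL, if_neg hγ.ne', intervalIntegral.integral_of_le ht.1,
    ← integral_const_mul, integral_Ioc_eq_integral_Ioo,
    ← integral_indicator measurableSet_Ioo]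
  congr 1
  ext s
  by_cases hs : s ∈ Ioo 0 t
  · have h1 : s ∈ Ioc 0 b := ⟨hs.1, hs.2.le.trans ht.2⟩
    have h2 : t - s ∈ Ioc 0 b := ⟨by linarith [hs.2], by linarith [hs.1, ht.2]⟩
    simp only [indicator_of_mem hs, trK, indicator_of_mem h1, indicator_of_mem h2, eK]
    ring
  · rw [indicator_of_notMem hs]
    by_cases h1 : s ∈ Ioc 0 b
    · have h2 : t - s ∉ Ioc 0 b := fun h => hs ⟨h1.1, by linarith [h.1]⟩
      simp [trK, indicator_of_notMem h2]
    · simp [trK, indicator_of_notMem h1]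

lemma RL_zero (f : ℝ → ℝ) : RL 0 f = f := by ext t; simp [RL]

lemma RL_int {b γ : ℝ} (hb : 0 < b) (hγ : 0 ≤ γ) {f : ℝ → ℝ}
    (hf : IntegrableOn f (Icc 0 b) volume) : IntegrableOn (RL γ f) (Icc 0 b) volume := by
  rcases hγ.eq_or_lt with rfl | hγ
  · have : RL 0 f = f := by ext t; simp [RL]
    rwa [this]
  · have h := (cv_int (trK_int hf) (trK_int (eK_int' hb hγ))).integrableOn (s := Icc 0 b)
    exact h.congr_fun (fun t ht => (RL_eq_cv hγ f ht).symm) measurableSet_Icc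

lemma trK_congr {b : ℝ} {f g : ℝ → ℝ} (h : f =ᵐ[volume.restrict (Icc 0 b)] g) :
    trK b f =ᵐ[volume] trK b g := by
  have := ae_restrict_of_ae_restrict_of_subset Ioc_subset_Icc_self h
  replace this := (ae_restrict_iff' measurableSet_Ioc).1 this
  filter_upwards [this] with x hx
  by_cases h : x ∈ Ioc 0 b
  · simp only [trK, indicator_of_mem h, hx h]
  · simp only [trK, indicator_of_notMem h]

lemma RL_congr {b γ : ℝ} (hγ : 0 ≤ γ) {f g : ℝ → ℝ}
    (h : f =ᵐ[volume.restrict (Icc 0 b)] g) :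
    RL γ f =ᵐ[volume.restrict (Icc 0 b)] RL γ g := by
  rcases hγ.eq_or_lt with rfl | hγ
  · rwa [RL_zero, RL_zero]
  · filter_upwards [ae_restrict_mem measurableSet_Icc] with t ht
    rw [RL_eq_cv hγ f ht, RL_eq_cv hγ g ht, cv_apply, cv_apply]
    apply integral_congr_ae
    filter_upwards [trK_congr h] with s hs
    rw [hs]

lemma RL_smul (γ c : ℝ) (f : ℝ → ℝ) (t : ℝ) : RL γ (fun s => c * f s) t = c * RL γ f t := by
  unfold RL
  split_ifs
  · rfl
  · rw [mul_left_comm, ← intervalIntegral.integral_const_mul c]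
    congr 2; ext s; ring

lemma cv_exists {f g : ℝ → ℝ} (hf : Integrable f volume) (hg : Integrable g volume) :
    ∀ᵐ x ∂volume, Integrable (fun s => f s * g (x - s)) volume :=
  hf.ae_convolution_exists (ContinuousLinearMap.mul ℝ ℝ) hg

lemma RL_add {b γ : ℝ} (hb : 0 < b) (hγ : 0 ≤ γ) {f g : ℝ → ℝ}
    (hf : IntegrableOn f (Icc 0 b) volume) (hg : IntegrableOn g (Icc 0 b) volume) :
    RL γ (fun t => f t + g t) =ᵐ[volume.restrict (Icc 0 b)] fun t => RL γ f t + RL γ g t := by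
  rcases hγ.eq_or_lt with rfl | hγ
  · simp only [RL_zero]; rfl
  · filter_upwards [ae_restrict_mem measurableSet_Icc,
      ae_restrict_of_ae (cv_exists (trK_int hf) (trK_int (eK_int' hb hγ))),
      ae_restrict_of_ae (cv_exists (trK_int hg) (trK_int (eK_int' hb hγ)))] with t ht h1 h2
    rw [RL_eq_cv hγ _ ht, RL_eq_cv hγ _ ht, RL_eq_cv hγ _ ht, cv_apply, cv_apply, cv_apply,
      ← integral_add h1 h2]
    congr 1
    ext s
    have : trK b (fun t => f t + g t) s = trK b f s + trK b g s :=
      congrFun (indicator_add (Ioc (0:ℝ) b) f g) s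
    rw [this]; ring

lemma beta_real {s t a : ℝ} (hs : 0 < s) (ht : 0 < t) (ha : 0 < a) :
    ∫ x in (0:ℝ)..a, x ^ (s - 1) * (a - x) ^ (t - 1) =
      a ^ (s + t - 1) * (Real.Gamma s * Real.Gamma t / Real.Gamma (s + t)) := by
  have h := Complex.betaIntegral_scaled s t ha
  rw [Complex.betaIntegral_eq_Gamma_mul_div _ _ (by simpa) (by simpa)] at h
  have h2 : ∫ x in (0:ℝ)..a, (x : ℂ) ^ ((s:ℂ) - 1) * ((a : ℂ) - x) ^ ((t:ℂ) - 1)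
      = ∫ x in (0:ℝ)..a, ((x ^ (s - 1) * (a - x) ^ (t - 1) : ℝ) : ℂ) := by
    apply intervalIntegral.integral_congr
    intro x hx
    rw [uIcc_of_le ha.le] at hx
    simp only
    rw [Complex.ofReal_mul, Complex.ofReal_cpow hx.1, Complex.ofReal_cpow (by linarith [hx.2])]
    push_cast; rfl
  rw [h2, intervalIntegral.integral_ofReal] at h
  have h3 : (a : ℂ) ^ ((s:ℂ) + t - 1) * (Complex.Gamma s * Complex.Gamma t / Complex.Gamma (s + t))
    = ((a ^ (s + t - 1) * (Real.Gamma s * Real.Gamma t / Real.Gamma (s + t)) : ℝ) : ℂ) := by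
    push_cast
    rw [Complex.ofReal_cpow ha.le, ← Complex.Gamma_ofReal, ← Complex.Gamma_ofReal, ← Complex.Gamma_ofReal]
    push_cast; rfl
  rw [h3] at h
  exact_mod_cast h

lemma RL_eK {γ δ t : ℝ} (hγ : 0 ≤ γ) (hδ : 0 < δ) (ht : 0 < t) :
    RL γ (eK δ) t = eK (γ + δ) t := by
  rcases hγ.eq_or_lt with rfl | hγ
  · simp [RL]
  · rw [RL, if_neg hγ.ne']
    have : ∫ s in (0:ℝ)..t, (t - s) ^ (γ - 1) * eK δ s
        = (1 / Real.Gamma δ) * ∫ s in (0:ℝ)..t, s ^ (δ - 1) * (t - s) ^ (γ - 1) := by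
      rw [← intervalIntegral.integral_const_mul]
      congr 1; ext s; simp only [eK]; ring
    rw [this, beta_real hδ hγ ht, eK, add_comm γ δ]
    have h1 := (Real.Gamma_pos_of_pos hδ).ne'
    have h2 := (Real.Gamma_pos_of_pos hγ).ne'
    have h3 := (Real.Gamma_pos_of_pos (add_pos hδ hγ)).ne'
    field_simp

lemma RL_eK_ae {b γ δ : ℝ} (hγ : 0 ≤ γ) (hδ : 0 < δ) :
    RL γ (eK δ) =ᵐ[volume.restrict (Icc 0 b)] eK (γ + δ) := by
  rw [Measure.restrict_congr_set (Ioc_ae_eq_Icc (μ := volume)).symm]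
  filter_upwards [ae_restrict_mem measurableSet_Ioc] with t ht
  exact RL_eK hγ hδ ht.1

lemma trK_of_nonpos {b : ℝ} (f : ℝ → ℝ) {s : ℝ} (hs : s ≤ 0) : trK b f s = 0 :=
  indicator_of_notMem (fun h => absurd h.1 (not_lt.2 hs)) _

lemma cv_of_nonpos {b : ℝ} (f g : ℝ → ℝ) {s : ℝ} (hs : s ≤ 0) :
    cv (trK b f) (trK b g) s = 0 := by
  rw [cv_apply]
  apply integral_eq_zero_of_ae
  refine Eventually.of_forall fun x => ?_
  rcases le_or_gt x 0 with h | h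
  · simp [trK_of_nonpos f h]
  · simp [trK_of_nonpos g (by linarith : s - x ≤ 0)]

lemma cv_ker {b γ δ : ℝ} (hγ : 0 < γ) (hδ : 0 < δ) {t : ℝ} (ht : t ≤ b) :
    cv (trK b (eK δ)) (trK b (eK γ)) t = trK b (eK (γ + δ)) t := by
  rcases le_or_gt t 0 with h | h
  · rw [cv_of_nonpos _ _ h, trK_of_nonpos _ h]
  · rw [← RL_eq_cv hγ _ ⟨h.le, ht⟩, RL_eK hγ.le hδ h, trK, indicator_of_mem]
    exact ⟨h, ht⟩

lemma cv_assoc {f g k : ℝ → ℝ} (hf : Integrable f volume) (hg : Integrable g volume)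
    (hk : Integrable k volume) : ∀ᵐ t ∂volume, cv (cv f g) k t = cv f (cv g k) t := by
  have h1 := hf.ae_convolution_exists (ContinuousLinearMap.mul ℝ ℝ) hg
  have h2 := hg.norm.ae_convolution_exists (ContinuousLinearMap.mul ℝ ℝ) hk.norm
  have h3 := hf.norm.ae_convolution_exists (ContinuousLinearMap.mul ℝ ℝ)
    (hg.norm.integrable_convolution (ContinuousLinearMap.mul ℝ ℝ) hk.norm)
  filter_upwards [h3] with t ht
  exact convolution_assoc _ _ _ _ (fun x y z => by simp [mul_assoc]) hf.1 hg.1 hk.1 h1 h2 ht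

lemma RL_RL {b γ δ : ℝ} (hb : 0 < b) (hγ : 0 ≤ γ) (hδ : 0 ≤ δ) {f : ℝ → ℝ}
    (hf : IntegrableOn f (Icc 0 b) volume) :
    RL γ (RL δ f) =ᵐ[volume.restrict (Icc 0 b)] RL (γ + δ) f := by
  rcases hγ.eq_or_lt with rfl | hγ
  · rw [RL_zero, zero_add]
  rcases hδ.eq_or_lt with rfl | hδ
  · rw [RL_zero, add_zero]
  filter_upwards [ae_restrict_mem measurableSet_Icc, ae_restrict_of_ae
    (cv_assoc (trK_int hf) (trK_int (eK_int' hb hδ)) (trK_int (eK_int' hb hγ)))] with t ht h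
  rw [RL_eq_cv hγ _ ht, RL_eq_cv (add_pos hγ hδ) _ ht]
  trans cv (cv (trK b f) (trK b (eK δ))) (trK b (eK γ)) t
  · rw [cv_apply, cv_apply]
    congr 1; ext s
    rcases le_or_gt s 0 with hs | hs
    · rw [trK_of_nonpos _ hs, cv_of_nonpos _ _ hs]
    rcases le_or_gt s b with hs' | hs'
    · rw [← RL_eq_cv hδ _ ⟨hs.le, hs'⟩, trK, indicator_of_mem]
      exact ⟨hs, hs'⟩
    · rw [trK_of_nonpos _ (by linarith [ht.2] : t - s ≤ 0)]; simp
  · rw [h, cv_apply, cv_apply]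
    congr 1; ext s
    rcases le_or_gt s 0 with hs | hs
    · rw [trK_of_nonpos _ hs]; simp
    · rw [cv_ker hγ hδ (by linarith [ht.2])]

lemma RL_comb {b γ ε : ℝ} (hb : 0 < b) (hγ : 0 ≤ γ) (hε : 0 ≤ ε) (S : Finset ℕ) (a δ : ℕ → ℝ)
    (hδ : ∀ k ∈ S, 0 < δ k) {φ : ℝ → ℝ} (hφ : IntegrableOn φ (Icc 0 b) volume) :
    IntegrableOn (fun t => (∑ k ∈ S, a k * eK (δ k) t) + RL ε φ t) (Icc 0 b) volume ∧
    RL γ (fun t => (∑ k ∈ S, a k * eK (δ k) t) + RL ε φ t) =ᵐ[volume.restrict (Icc 0 b)]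
      fun t => (∑ k ∈ S, a k * eK (γ + δ k) t) + RL (γ + ε) φ t := by
  induction S using Finset.induction_on with
  | empty =>
    simp only [Finset.sum_empty, zero_add]
    exact ⟨RL_int hb hε hφ, RL_RL hb hγ hε hφ⟩
  | insert i S hi ih =>
    obtain ⟨ih1, ih2⟩ := ih (fun k hk => hδ k (Finset.mem_insert_of_mem hk))
    have hi0 := hδ i (Finset.mem_insert_self _ _)
    have hint : IntegrableOn (fun t => a i * eK (δ i) t) (Icc 0 b) volume :=
      (eK_int' hb hi0).const_mul _
    simp only [Finset.sum_insert hi, add_assoc]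
    refine ⟨hint.add ih1, ?_⟩
    filter_upwards [RL_add hb hγ hint ih1, ih2, RL_eK_ae (b := b) hγ hi0] with t h1 h2 h3
    rw [h1, h2, RL_smul, h3]

noncomputable def PP (n : ℕ) (d : ℕ → ℝ) (φ : ℝ → ℝ) : ℝ → ℝ := fun t =>
  (∑ j ∈ Finset.range n, d j * eK ((j:ℝ) + 1) t) + RL n φ t

lemma PP_int {b : ℝ} (hb : 0 < b) (n : ℕ) (d : ℕ → ℝ) {φ : ℝ → ℝ}
    (hφ : IntegrableOn φ (Icc 0 b) volume) : IntegrableOn (PP n d φ) (Icc 0 b) volume :=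
  (RL_comb hb le_rfl (Nat.cast_nonneg n) (Finset.range n) d (fun j => (j:ℝ) + 1)
    (fun k _ => by positivity) hφ).1

lemma PP_succ {b : ℝ} (hb : 0 < b) (n : ℕ) (d : ℕ → ℝ) {φ : ℝ → ℝ}
    (hφ : IntegrableOn φ (Icc 0 b) volume) :
    PP (n + 1) d φ =ᵐ[volume.restrict (Icc 0 b)]
      fun t => d 0 + RL 1 (PP n (fun j => d (j + 1)) φ) t := by
  have h := (RL_comb hb zero_le_one (Nat.cast_nonneg n) (Finset.range n) (fun j => d (j + 1))
    (fun j => (j:ℝ) + 1) (fun k _ => by positivity) hφ).2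
  filter_upwards [h] with t ht
  unfold PP
  rw [ht, Finset.sum_range_succ']
  have h1 : eK (((0:ℕ):ℝ) + 1) t = 1 := by simp [eK]
  rw [h1]
  push_cast
  have h2 : ∀ j : ℕ, (1:ℝ) + ((j:ℝ) + 1) = j + 1 + 1 := fun j => by ring
  simp only [h2, add_comm (1:ℝ) (n:ℝ)]
  ring

lemma RL_one (h : ℝ → ℝ) (t : ℝ) : RL 1 h t = ∫ s in (0:ℝ)..t, h s := by
  simp [RL]

lemma RL_one_cont {b : ℝ} (hb : 0 < b) {h : ℝ → ℝ} (hh : IntegrableOn h (Icc 0 b) volume) :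
    ContinuousOn (fun t => ∫ s in (0:ℝ)..t, h s) (Icc 0 b) := by
  have := intervalIntegral.continuousOn_primitive_interval (μ := volume) (f := h) (a := 0) (b := b)
    (by rwa [uIcc_of_le hb.le])
  rwa [uIcc_of_le hb.le] at this

lemma zero_one {b : ℝ} (hb : 0 < b) {c : ℝ} {h : ℝ → ℝ} (hh : IntegrableOn h (Icc 0 b) volume)
    (h0 : (fun t => c + RL 1 h t) =ᵐ[volume.restrict (Icc 0 b)] fun _ => 0) :
    c = 0 ∧ h =ᵐ[volume.restrict (Icc 0 b)] fun _ => 0 := by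
  simp only [RL_one] at h0
  have hE := Measure.eqOn_Icc_of_ae_eq volume hb.ne h0
    (continuousOn_const.add (RL_one_cont hb hh)) continuousOn_const
  have hc : c = 0 := by simpa using hE (left_mem_Icc.2 hb.le)
  refine ⟨hc, ?_⟩
  subst hc
  have hi : IntervalIntegrable h volume 0 b := by
    rw [intervalIntegrable_iff_integrableOn_Icc_of_le hb.le]; exact hh
  have hd := hi.ae_hasDerivAt_integral
  rw [uIcc_of_le hb.le] at hd
  rw [Measure.restrict_congr_set (Ioo_ae_eq_Icc (μ := volume)).symm]
  filter_upwards [ae_restrict_mem measurableSet_Ioo, ae_restrict_of_ae hd] with t ht hdt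
  have h1 := hdt (Ioo_subset_Icc_self ht) 0 (left_mem_Icc.2 hb.le)
  have h2 : (fun x => ∫ s in (0:ℝ)..x, h s) =ᶠ[𝓝 t] fun _ => 0 := by
    filter_upwards [Icc_mem_nhds ht.1 ht.2] with x hx
    simpa using hE hx
  exact (h1.congr_of_eventuallyEq h2.symm).unique (hasDerivAt_const t (0:ℝ))

lemma PP_zero {b : ℝ} (hb : 0 < b) (n : ℕ) : ∀ (d : ℕ → ℝ) {φ : ℝ → ℝ},
    IntegrableOn φ (Icc 0 b) volume → PP n d φ =ᵐ[volume.restrict (Icc 0 b)] (fun _ => 0) →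
    (∀ j < n, d j = 0) ∧ φ =ᵐ[volume.restrict (Icc 0 b)] fun _ => 0 := by
  induction n with
  | zero =>
    intro d φ hφ h
    refine ⟨by simp, ?_⟩
    have : PP 0 d φ = φ := by ext t; simp [PP, RL]
    rwa [this] at h
  | succ n ih =>
    intro d φ hφ h
    obtain ⟨h1, h2⟩ := zero_one hb (PP_int hb n (fun j => d (j+1)) hφ)
      ((PP_succ hb n d hφ).symm.trans h)
    obtain ⟨h3, h4⟩ := ih _ hφ h2
    refine ⟨fun j hj => ?_, h4⟩
    cases j with
    | zero => exact h1
    | succ j => exact h3 j (by omega)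

lemma PP_one {b : ℝ} (hb : 0 < b) (d : ℕ → ℝ) {φ : ℝ → ℝ}
    (hφ : IntegrableOn φ (Icc 0 b) volume) :
    PP 1 d φ =ᵐ[volume.restrict (Icc 0 b)] fun t => d 0 + ∫ s in (0:ℝ)..t, φ s := by
  have h := PP_succ hb 0 d hφ
  have h2 : PP 0 (fun j => d (j+1)) φ = φ := by ext t; simp [PP, RL]
  simpa only [h2, RL_one] using h

lemma repr_of_ACn {b : ℝ} (hb : 0 < b) (n : ℕ) : ∀ g : ℝ → ℝ, MemACn b (n + 1) g →
    ∃ (d : ℕ → ℝ) (φ : ℝ → ℝ), IntegrableOn φ (Icc 0 b) volume ∧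
      g =ᵐ[volume.restrict (Icc 0 b)] PP (n + 1) d φ := by
  induction n with
  | zero =>
    rintro g ⟨-, φ, hφ, h⟩
    simp only [zero_add, Nat.sub_self, iteratedDerivWithin_zero] at h
    refine ⟨fun _ => g 0, φ, hφ, ?_⟩
    filter_upwards [PP_one hb (fun _ => g 0) hφ, ae_restrict_mem measurableSet_Icc] with t h1 ht
    rw [h1, h t ht]
  | succ n ih =>
    rintro g ⟨h1, h2⟩
    simp only [Nat.add_sub_cancel] at h1 h2
    have hu : UniqueDiffOn ℝ (Icc (0:ℝ) b) := uniqueDiffOn_Icc hb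
    rw [iteratedDerivWithin_succ'] at h2
    have h1' : ContDiffOn ℝ ((n:WithTop ℕ∞) + 1) g (Icc 0 b) := by exact_mod_cast h1
    rw [contDiffOn_succ_iff_derivWithin hu] at h1'
    obtain ⟨hdiff, -, hcd⟩ := h1'
    obtain ⟨d, φ, hφ, hd⟩ := ih (derivWithin g (Icc 0 b)) ⟨hcd, h2⟩
    refine ⟨fun j => if j = 0 then g 0 else d (j - 1), φ, hφ, ?_⟩
    have h3 := PP_succ hb (n + 1) (fun j => if j = 0 then g 0 else d (j - 1)) hφ
    simp only [Nat.add_eq_zero_iff, one_ne_zero, and_false, if_false, if_true,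
      Nat.add_sub_cancel] at h3
    refine EventuallyEq.trans ?_ h3.symm
    filter_upwards [RL_congr zero_le_one hd, ae_restrict_mem measurableSet_Icc] with t h4 ht
    rw [← h4, RL_one]
    have hcont : ContinuousOn (derivWithin g (Icc 0 b)) (Icc 0 t) :=
      hcd.continuousOn.mono (Icc_subset_Icc_right ht.2)
    rw [intervalIntegral.integral_eq_sub_of_hasDerivAt_of_le ht.1
      (hdiff.continuousOn.mono (Icc_subset_Icc_right ht.2)) (fun x hx => ?_)
      (hcont.intervalIntegrable_of_Icc ht.1)]
    · ring
    · have hx' : x ∈ Icc 0 b := ⟨hx.1.le, hx.2.le.trans ht.2⟩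
      exact (hdiff x hx').hasDerivWithinAt.hasDerivAt
        (Icc_mem_nhds hx.1 (hx.2.trans_le ht.2))

lemma MemAC_congr {b : ℝ} (hb : 0 < b) {g h : ℝ → ℝ} (hgh : EqOn g h (Icc 0 b))
    (hg : MemAC b h) : MemAC b g := by
  obtain ⟨φ, hφ, H⟩ := hg
  refine ⟨φ, hφ, fun t ht => ?_⟩
  rw [hgh ht, hgh (left_mem_Icc.2 hb.le), H t ht]

lemma ACn_of_repr {b : ℝ} (hb : 0 < b) (n : ℕ) : ∀ (d : ℕ → ℝ) {φ : ℝ → ℝ},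
    IntegrableOn φ (Icc 0 b) volume →
    ∃ g : ℝ → ℝ, g =ᵐ[volume.restrict (Icc 0 b)] PP (n + 1) d φ ∧ MemACn b (n + 1) g := by
  induction n with
  | zero =>
    intro d φ hφ
    refine ⟨fun t => d 0 + ∫ s in (0:ℝ)..t, φ s, (PP_one hb d hφ).symm, ?_, ?_⟩
    · have := (continuousOn_const (c := d 0)).add (RL_one_cont hb hφ)
      simp only [zero_add, Nat.sub_self, Nat.cast_zero, contDiffOn_zero]
      exact this
    · refine ⟨φ, hφ, fun t ht => ?_⟩
      simp [iteratedDerivWithin_zero]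
  | succ n ih =>
    intro d φ hφ
    obtain ⟨g, hg, hc, hac⟩ := ih (fun j => d (j + 1)) hφ
    simp only [Nat.add_sub_cancel] at hc hac
    have hu : UniqueDiffOn ℝ (Icc (0:ℝ) b) := uniqueDiffOn_Icc hb
    have hgc : ContinuousOn g (Icc 0 b) := hc.continuousOn
    have hder : ∀ x ∈ Icc (0:ℝ) b,
        HasDerivWithinAt (fun t => d 0 + ∫ s in (0:ℝ)..t, g s) (g x) (Icc 0 b) x := by
      intro x hx
      have : Fact (x ∈ Icc (0:ℝ) b) := ⟨hx⟩
      refine HasDerivWithinAt.const_add _ ?_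
      refine intervalIntegral.integral_hasDerivWithinAt_right
        ((hgc.mono (Icc_subset_Icc_right hx.2)).intervalIntegrable_of_Icc hx.1) ?_ (hgc x hx)
      exact hgc.stronglyMeasurableAtFilter_nhdsWithin measurableSet_Icc x
    have heq : EqOn (derivWithin (fun t => d 0 + ∫ s in (0:ℝ)..t, g s) (Icc 0 b)) g (Icc 0 b) :=
      fun x hx => (hder x hx).derivWithin (hu x hx)
    refine ⟨fun t => d 0 + ∫ s in (0:ℝ)..t, g s, ?_, ?_, ?_⟩
    · refine EventuallyEq.trans ?_ (PP_succ hb (n + 1) d hφ).symm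
      filter_upwards [RL_congr zero_le_one hg] with t ht
      rw [← ht, RL_one]
    · simp only [Nat.add_sub_cancel]
      have : ContDiffOn ℝ ((n:WithTop ℕ∞) + 1) (fun t => d 0 + ∫ s in (0:ℝ)..t, g s) (Icc 0 b) := by
        rw [contDiffOn_succ_iff_derivWithin hu]
        refine ⟨fun x hx => (hder x hx).differentiableWithinAt, by simp, hc.congr heq⟩
      exact_mod_cast this
    · simp only [Nat.add_sub_cancel]
      rw [iteratedDerivWithin_succ']
      exact MemAC_congr hb (iteratedDerivWithin_congr heq) hac

lemma sum_conv (α : ℝ) (n : ℕ) (hn : (n:ℝ) < α + 1) (a : ℕ → ℝ) (t : ℝ) :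
    ∑ k ∈ Finset.Icc 1 n, a k * t ^ (α - (k:ℝ)) =
      ∑ j ∈ Finset.range n, (a (n - j) * Real.Gamma (α - n + j + 1)) * eK (α - n + j + 1) t := by
  refine Finset.sum_bij' (fun k _ => n - k) (fun j _ => n - j) ?_ ?_ ?_ ?_ ?_
  · intro k hk; simp at hk ⊢; omega
  · intro k hk; simp at hk ⊢; omega
  · intro k hk; simp at hk ⊢; omega
  · intro k hk; simp at hk ⊢; omega
  · intro k hk
    simp only [Finset.mem_Icc] at hk
    have h1 : n - (n - k) = k := by omega
    have hk' : (k:ℝ) ≤ n := by exact_mod_cast hk.2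
    have h2 : α - n + ((n - k : ℕ):ℝ) + 1 = α - k + 1 := by
      rw [Nat.cast_sub hk.2]; ring
    have h3 : Real.Gamma (α - k + 1) ≠ 0 := (Real.Gamma_pos_of_pos (by linarith)).ne'
    simp only [h1, h2, eK]
    rw [show α - (k:ℝ) + 1 - 1 = α - k by ring]
    field_simp

noncomputable def QQ (α : ℝ) (n : ℕ) (d : ℕ → ℝ) (φ : ℝ → ℝ) : ℝ → ℝ := fun t =>
  (∑ j ∈ Finset.range n, d j * eK (α - n + j + 1) t) + RL α φ t

lemma QQ_RL {b α : ℝ} (hb : 0 < b) (hα : 0 < α) {n : ℕ} (hn : (n:ℝ) < α + 1) (hn' : α ≤ n)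
    (d : ℕ → ℝ) {φ : ℝ → ℝ} (hφ : IntegrableOn φ (Icc 0 b) volume) :
    IntegrableOn (QQ α n d φ) (Icc 0 b) volume ∧
    RL (n - α) (QQ α n d φ) =ᵐ[volume.restrict (Icc 0 b)] PP n d φ := by
  have h := RL_comb hb (sub_nonneg.2 hn') hα.le (Finset.range n) d (fun j => α - n + j + 1)
    (fun k _ => by have : (0:ℝ) ≤ k := Nat.cast_nonneg k
                   linarith) hφ
  refine ⟨h.1, h.2.trans (Eventually.of_forall fun t => ?_)⟩
  have h2 : ∀ j : ℕ, (n:ℝ) - α + (α - n + j + 1) = j + 1 := fun j => by ring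
  simp only [PP, h2, sub_add_cancel]

lemma RL_sub {b γ : ℝ} (hb : 0 < b) (hγ : 0 ≤ γ) {f g : ℝ → ℝ}
    (hf : IntegrableOn f (Icc 0 b) volume) (hg : IntegrableOn g (Icc 0 b) volume) :
    RL γ (fun t => f t + (-1) * g t) =ᵐ[volume.restrict (Icc 0 b)]
      fun t => RL γ f t + (-1) * RL γ g t := by
  filter_upwards [RL_add hb hγ hf (g := fun t => (-1) * g t) (hg.const_mul (-1))] with t ht
  rw [ht, RL_smul]

lemma RL_inj {b γ : ℝ} (hb : 0 < b) (hγ : 0 ≤ γ) {f g : ℝ → ℝ}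
    (hf : IntegrableOn f (Icc 0 b) volume) (hg : IntegrableOn g (Icc 0 b) volume)
    (h : RL γ f =ᵐ[volume.restrict (Icc 0 b)] RL γ g) :
    f =ᵐ[volume.restrict (Icc 0 b)] g := by
  have hi : IntegrableOn (fun t => f t + (-1) * g t) (Icc 0 b) volume :=
    hf.add (hg.const_mul (-1))
  have h0 : RL γ (fun t => f t + (-1) * g t) =ᵐ[volume.restrict (Icc 0 b)] fun _ => 0 := by
    filter_upwards [RL_sub hb hγ hf hg, h] with t h1 h2
    rw [h1, h2]; ring
  have hm : γ ≤ ⌈γ⌉₊ := Nat.le_ceil γ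
  have h1 := RL_congr (sub_nonneg.2 hm) h0
  have h2 := (RL_RL hb (sub_nonneg.2 hm) hγ hi).symm.trans h1
  rw [sub_add_cancel] at h2
  have h3 : RL ((⌈γ⌉₊:ℝ) - γ) (fun _ => 0) = fun _ => 0 := by ext t; simp [RL]
  rw [h3] at h2
  have hPP : PP ⌈γ⌉₊ (fun _ => 0) (fun t => f t + (-1) * g t)
      =ᵐ[volume.restrict (Icc 0 b)] fun _ => 0 := by
    filter_upwards [h2] with t ht
    simp only [PP, zero_mul, Finset.sum_const_zero, zero_add]
    exact ht
  have h4 := (PP_zero hb ⌈γ⌉₊ (fun _ => 0) hi hPP).2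
  filter_upwards [h4] with t ht
  linarith

lemma PP_inj {b : ℝ} (hb : 0 < b) (n : ℕ) (d d' : ℕ → ℝ) {φ φ' : ℝ → ℝ}
    (hφ : IntegrableOn φ (Icc 0 b) volume) (hφ' : IntegrableOn φ' (Icc 0 b) volume)
    (h : PP n d φ =ᵐ[volume.restrict (Icc 0 b)] PP n d' φ') :
    (∀ j < n, d j = d' j) ∧ φ =ᵐ[volume.restrict (Icc 0 b)] φ' := by
  have hi : IntegrableOn (fun t => φ t + (-1) * φ' t) (Icc 0 b) volume :=
    hφ.add (hφ'.const_mul (-1))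
  obtain ⟨h1, h2⟩ := PP_zero hb n (fun j => d j - d' j) hi (by
    filter_upwards [h, RL_sub hb (Nat.cast_nonneg n) hφ hφ'] with t h1 h2
    simp only [PP] at h1 ⊢
    rw [h2]
    simp only [sub_mul, Finset.sum_sub_distrib]
    linarith)
  refine ⟨fun j hj => sub_eq_zero.1 (h1 j hj), ?_⟩
  filter_upwards [h2] with t ht
  linarith

/-- `X_α = ⟨t^{α-⌈α⌉}, …, t^{α-1}⟩ ⊕ I^α(L¹[0,b])`: every `f ∈ X_α` is, in exactly one way
(as an element of `L¹[0,b]`), a linear combination `∑_{k=1}^{⌈α⌉} a_k t^{α-k}` plus `I^α φ`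
with `φ ∈ L¹[0,b]`, and conversely every such function belongs to `X_α`. -/
theorem X_direct_sum (b : ℝ) (hb : 0 < b) (α : ℝ) (hα : 0 < α) :
    (∀ f : ℝ → ℝ, MemX b α f →
      ∃ (a : ℕ → ℝ) (φ : ℝ → ℝ), IntegrableOn φ (Set.Icc 0 b) volume ∧
        f =ᵐ[volume.restrict (Set.Icc 0 b)]
          (fun t => (∑ k ∈ Finset.Icc 1 ⌈α⌉₊, a k * t ^ (α - (k:ℝ))) + RL α φ t) ∧
        ∀ (a' : ℕ → ℝ) (φ' : ℝ → ℝ), IntegrableOn φ' (Set.Icc 0 b) volume →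
          f =ᵐ[volume.restrict (Set.Icc 0 b)]
            (fun t => (∑ k ∈ Finset.Icc 1 ⌈α⌉₊, a' k * t ^ (α - (k:ℝ))) + RL α φ' t) →
          (∀ k ∈ Finset.Icc 1 ⌈α⌉₊, a k = a' k) ∧
            φ =ᵐ[volume.restrict (Set.Icc 0 b)] φ') ∧
    ∀ (a : ℕ → ℝ) (φ : ℝ → ℝ), IntegrableOn φ (Set.Icc 0 b) volume →
      MemX b α (fun t => (∑ k ∈ Finset.Icc 1 ⌈α⌉₊, a k * t ^ (α - (k:ℝ))) + RL α φ t) := by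
  obtain ⟨m, hm⟩ : ∃ m, ⌈α⌉₊ = m + 1 :=
    Nat.exists_eq_succ_of_ne_zero (Nat.ceil_pos.2 hα).ne'
  have hn : (⌈α⌉₊:ℝ) < α + 1 := Nat.ceil_lt_add_one hα.le
  have hn' : α ≤ ⌈α⌉₊ := Nat.le_ceil α
  have hβ : 0 ≤ (⌈α⌉₊:ℝ) - α := sub_nonneg.2 hn'
  unfold MemX
  generalize ⌈α⌉₊ = n at *
  have hG : ∀ j : ℕ, 0 < Real.Gamma (α - n + j + 1) := fun j =>
    Real.Gamma_pos_of_pos (by have : (0:ℝ) ≤ j := Nat.cast_nonneg j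
                              linarith)
  have hconv : ∀ (a : ℕ → ℝ) (φ : ℝ → ℝ),
      (fun t : ℝ => (∑ k ∈ Finset.Icc 1 n, a k * t ^ (α - (k:ℝ))) + RL α φ t) =
        QQ α n (fun j => a (n - j) * Real.Gamma (α - n + j + 1)) φ := by
    intro a φ
    ext t
    rw [sum_conv α n hn]; rfl
  simp only [hconv]
  refine ⟨fun f hf => ?_, fun a φ hφ => ?_⟩
  · obtain ⟨hfi, hX⟩ := hf
    obtain ⟨g, hg, hac⟩ := hX hα.ne'
    rw [hm] at hac
    obtain ⟨d, φ, hφ, hd⟩ := repr_of_ACn hb m g hac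
    rw [← hm] at hd
    have hfQ : ∀ (a' : ℕ → ℝ), (∀ j < n, a' (n - j) * Real.Gamma (α - n + j + 1) = d j) →
        f =ᵐ[volume.restrict (Icc 0 b)]
          QQ α n (fun j => a' (n - j) * Real.Gamma (α - n + j + 1)) φ := by
      intro a' ha'
      have he : QQ α n (fun j => a' (n - j) * Real.Gamma (α - n + j + 1)) φ = QQ α n d φ := by
        ext t
        simp only [QQ]
        congr 1
        exact Finset.sum_congr rfl fun j hj => by rw [ha' j (Finset.mem_range.1 hj)]
      rw [he]
      obtain ⟨q1, q2⟩ := QQ_RL hb hα hn hn' d hφ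
      exact RL_inj hb hβ hfi q1 (hg.symm.trans (hd.trans q2.symm))
    have ha0 : f =ᵐ[volume.restrict (Icc 0 b)] QQ α n (fun j =>
        (fun k => d (n - k) / Real.Gamma (α - n + ((n - k : ℕ):ℝ) + 1)) (n - j)
          * Real.Gamma (α - n + j + 1)) φ := by
      refine hfQ (fun k => d (n - k) / Real.Gamma (α - n + ((n - k : ℕ):ℝ) + 1)) ?_
      intro j hj
      have : n - (n - j) = j := by omega
      simp only [this]
      exact div_mul_cancel₀ _ (hG j).ne'
    refine ⟨fun k => d (n - k) / Real.Gamma (α - n + ((n - k : ℕ):ℝ) + 1), φ, hφ, ha0, fun a' φ' hφ' h' => ?_⟩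
    have e1 := RL_congr hβ (ha0.symm.trans h')
    have e2 := (QQ_RL hb hα hn hn' _ hφ).2.symm.trans (e1.trans (QQ_RL hb hα hn hn' _ hφ').2)
    obtain ⟨h1, h2⟩ := PP_inj hb n _ _ hφ hφ' e2
    refine ⟨fun k hk => ?_, h2⟩
    rw [Finset.mem_Icc] at hk
    have h3 := h1 (n - k) (by omega)
    have h4 : n - (n - k) = k := by omega
    simp only [h4] at h3
    exact mul_right_cancel₀ (hG (n - k)).ne' h3
  · obtain ⟨q1, q2⟩ := QQ_RL hb hα hn hn' (fun j => a (n - j) * Real.Gamma (α - n + j + 1)) hφ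
    refine ⟨q1, fun _ => ?_⟩
    obtain ⟨g, hg1, hg2⟩ := ACn_of_repr hb m
      (fun j => a (n - j) * Real.Gamma (α - n + j + 1)) hφ
    rw [← hm] at hg1 hg2
    exact ⟨g, hg1.trans q2.symm, hg2⟩
end

section
/- Let α > 0 and f ∈ L¹[0,b]. Then f belongs to the range I^α(L¹[0,b]) if and only if f ∈ X_α and D^s(I^{⌈α⌉−α} f)(0) = 0 for every s ∈ {0, 1, …, ⌈α⌉−1}, where D^s denotes the s-th (weak) derivative. -/
open MeasureTheory Set Filter Topology

open scoped Convolution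

namespace RLaux

/-- primitive -/
noncomputable def J (u : ℝ → ℝ) : ℝ → ℝ := fun t => ∫ s in (0:ℝ)..t, u s

/-- convolution with multiplication -/
noncomputable def cv (F k : ℝ → ℝ) : ℝ → ℝ :=
  MeasureTheory.convolution F k (ContinuousLinearMap.mul ℝ ℝ) volume

lemma cv_apply (F k : ℝ → ℝ) (t : ℝ) : cv F k t = ∫ s, F s * k (t - s) := rfl

lemma cv_nonpos {F k : ℝ → ℝ} (hF : ∀ s ≤ 0, F s = 0) (hk : ∀ s ≤ 0, k s = 0) :
    ∀ t ≤ 0, cv F k t = 0 := by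
  intro t ht
  rw [cv_apply]
  have : ∀ s, F s * k (t - s) = 0 := by
    intro s
    rcases le_or_gt s 0 with h | h
    · rw [hF s h, zero_mul]
    · rw [hk (t - s) (by linarith), mul_zero]
  simp [this]

lemma cv_eq {b α : ℝ} (hα : α ≠ 0) {h F k : ℝ → ℝ}
    (hF : ∀ s ≤ 0, F s = 0) (hk : ∀ s ≤ 0, k s = 0)
    (hF' : ∀ s ∈ Ioc 0 b, F s = h s)
    (hk' : ∀ s ∈ Ioc 0 b, k s = s ^ (α - 1) / Real.Gamma α) :
    ∀ t ∈ Icc 0 b, cv F k t = RL α h t := by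
  intro t ht
  rw [cv_apply, RL, if_neg hα, intervalIntegral.integral_of_le ht.1,
    integral_Ioc_eq_integral_Ioo, ← integral_const_mul, ← integral_indicator measurableSet_Ioo]
  congr 1
  ext s
  by_cases hs : s ∈ Ioo 0 t
  · rw [indicator_of_mem hs, hF' s ⟨hs.1, hs.2.le.trans ht.2⟩,
      hk' (t - s) ⟨by linarith [hs.2], by linarith [hs.1, ht.2]⟩]
    ring
  · rw [indicator_of_notMem hs]
    rcases le_or_gt s 0 with h1 | h1
    · rw [hF s h1, zero_mul]
    · have : t ≤ s := by
        by_contra hc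
        exact hs ⟨h1, not_le.1 hc⟩
      rw [hk (t - s) (by linarith), mul_zero]

/-- truncated kernel -/
noncomputable def K (b α : ℝ) : ℝ → ℝ :=
  indicator (Ioc 0 b) (fun t => t ^ (α - 1) / Real.Gamma α)

lemma ind_nonpos (b : ℝ) (h : ℝ → ℝ) : ∀ s ≤ 0, indicator (Ioc 0 b) h s = 0 := by
  intro s hs
  exact indicator_of_notMem (fun hh => absurd hh.1 (not_lt.2 hs)) _

lemma ind_mem (b : ℝ) (h : ℝ → ℝ) : ∀ s ∈ Ioc 0 b, indicator (Ioc 0 b) h s = h s :=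
  fun _ hs => indicator_of_mem hs _

lemma K_int {b α : ℝ} (hb : 0 < b) (hα : 0 < α) : Integrable (K b α) := by
  rw [K, integrable_indicator_iff measurableSet_Ioc]
  have := intervalIntegral.intervalIntegrable_rpow' (a := 0) (b := b) (r := α - 1) (by linarith)
  rw [intervalIntegrable_iff_integrableOn_Ioc_of_le hb.le] at this
  exact this.div_const _

lemma beta_real {α β : ℝ} (hα : 0 < α) (hβ : 0 < β) {t : ℝ} (ht : 0 < t) :
    RL β (fun x => x ^ (α - 1) / Real.Gamma α) t = t ^ (α + β - 1) / Real.Gamma (α + β) := by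
  have h1 := Complex.betaIntegral_scaled (α : ℂ) (β : ℂ) ht
  have h2 := Complex.betaIntegral_eq_Gamma_mul_div (α : ℂ) (β : ℂ) (by simpa) (by simpa)
  rw [h2] at h1
  have h3 : ∫ x in (0:ℝ)..t, (x : ℂ) ^ ((α : ℂ) - 1) * ((t : ℂ) - x) ^ ((β : ℂ) - 1)
      = ((∫ x in (0:ℝ)..t, x ^ (α - 1) * (t - x) ^ (β - 1) : ℝ) : ℂ) := by
    rw [← intervalIntegral.integral_ofReal]
    apply intervalIntegral.integral_congr
    intro x hx
    rw [uIcc_of_le ht.le] at hx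
    simp only
    push_cast
    rw [Complex.ofReal_cpow hx.1, Complex.ofReal_cpow (by linarith [hx.2])]
    push_cast
    rfl
  rw [h3] at h1
  have h4 : ∫ x in (0:ℝ)..t, x ^ (α - 1) * (t - x) ^ (β - 1)
      = t ^ (α + β - 1) * (Real.Gamma α * Real.Gamma β / Real.Gamma (α + β)) := by
    apply Complex.ofReal_injective
    rw [h1]
    push_cast
    rw [Complex.ofReal_cpow ht.le, ← Complex.Gamma_ofReal, ← Complex.Gamma_ofReal,
      ← Complex.Gamma_ofReal]
    push_cast
    rfl
  have ga := (Real.Gamma_pos_of_pos hα).ne'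
  have gb := (Real.Gamma_pos_of_pos hβ).ne'
  have gab := (Real.Gamma_pos_of_pos (add_pos hα hβ)).ne'
  rw [RL, if_neg hβ.ne']
  have h5 : ∀ x, (t - x) ^ (β - 1) * (x ^ (α - 1) / Real.Gamma α)
      = (1 / Real.Gamma α) * (x ^ (α - 1) * (t - x) ^ (β - 1)) := by
    intro x; ring
  simp_rw [h5]
  rw [intervalIntegral.integral_const_mul, h4]
  field_simp

lemma ind_int {b : ℝ} {h : ℝ → ℝ} (hh : IntegrableOn h (Icc 0 b)) :
    Integrable (indicator (Ioc 0 b) h) :=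
  (integrable_indicator_iff measurableSet_Ioc).2 (hh.mono_set Ioc_subset_Icc_self)

lemma RL_int {b α : ℝ} (hb : 0 < b) (hα : 0 < α) {h : ℝ → ℝ} (hh : IntegrableOn h (Icc 0 b)) :
    IntegrableOn (RL α h) (Icc 0 b) := by
  have h1 : Integrable (cv (indicator (Ioc 0 b) h) (K b α)) :=
    (ind_int hh).integrable_convolution _ (K_int hb hα)
  refine h1.integrableOn.congr_fun ?_ measurableSet_Icc
  exact cv_eq hα.ne' (ind_nonpos _ _) (ind_nonpos _ _) (ind_mem _ _) (ind_mem _ _)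

lemma RL_semigroup {b α β : ℝ} (hb : 0 < b) (hα : 0 < α) (hβ : 0 < β) {h : ℝ → ℝ}
    (hh : IntegrableOn h (Icc 0 b)) :
    RL β (RL α h) =ᵐ[volume.restrict (Icc 0 b)] RL (α + β) h := by
  set H := indicator (Ioc 0 b) h
  have hH : Integrable H := ind_int hh
  have hKa := K_int hb hα
  have hKb := K_int hb hβ
  have hN : Integrable (cv (fun x => ‖K b α x‖) (fun x => ‖K b β x‖)) :=
    hKa.norm.integrable_convolution _ hKb.norm
  have e1 := hH.ae_convolution_exists (ContinuousLinearMap.mul ℝ ℝ) hKa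
  have e2 := hKa.norm.ae_convolution_exists (ContinuousLinearMap.mul ℝ ℝ) hKb.norm
  have e3 := hH.norm.ae_convolution_exists (ContinuousLinearMap.mul ℝ ℝ) hN
  have key : ∀ᵐ t, cv (cv H (K b α)) (K b β) t = cv H (cv (K b α) (K b β)) t := by
    filter_upwards [e3] with t ht
    exact convolution_assoc (ContinuousLinearMap.mul ℝ ℝ) (ContinuousLinearMap.mul ℝ ℝ)
      (ContinuousLinearMap.mul ℝ ℝ) (ContinuousLinearMap.mul ℝ ℝ)
      (fun x y z => by simp [mul_assoc]) hH.aestronglyMeasurable hKa.aestronglyMeasurable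
      hKb.aestronglyMeasurable e1 e2 ht
  have Ha : ∀ t ∈ Icc 0 b, cv H (K b α) t = RL α h t :=
    cv_eq hα.ne' (ind_nonpos _ _) (ind_nonpos _ _) (ind_mem _ _) (ind_mem _ _)
  have KK : ∀ t ∈ Icc 0 b, cv (K b α) (K b β) t = RL β (fun x => x ^ (α - 1) / Real.Gamma α) t :=
    cv_eq hβ.ne' (ind_nonpos _ _) (ind_nonpos _ _) (ind_mem _ _) (ind_mem _ _)
  rw [EventuallyEq, ae_restrict_iff' measurableSet_Icc]
  filter_upwards [key] with t ht htb
  rw [← cv_eq (b := b) hβ.ne' (F := cv H (K b α)) (k := K b β)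
    (cv_nonpos (ind_nonpos _ _) (ind_nonpos _ _)) (ind_nonpos _ _)
    (fun s hs => Ha s ⟨hs.1.le, hs.2⟩) (ind_mem _ _) t htb, ht]
  refine cv_eq (add_pos hα hβ).ne' (ind_nonpos _ _)
    (cv_nonpos (ind_nonpos _ _) (ind_nonpos _ _)) (ind_mem _ _) ?_ t htb
  intro s hs
  exact (KK s ⟨hs.1.le, hs.2⟩).trans (beta_real hα hβ hs.1)

lemma ii_congr {b : ℝ} {u v w : ℝ → ℝ} (h : u =ᵐ[volume.restrict (Icc 0 b)] v) {t : ℝ}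
    (ht : t ∈ Icc 0 b) : ∫ s in (0:ℝ)..t, w s * u s = ∫ s in (0:ℝ)..t, w s * v s := by
  apply intervalIntegral.integral_congr_ae
  rw [EventuallyEq, ae_restrict_iff' measurableSet_Icc] at h
  filter_upwards [h] with s hs hs'
  rw [uIoc_of_le ht.1] at hs'
  rw [hs ⟨hs'.1.le, hs'.2.trans ht.2⟩]

lemma RL_congr {b α : ℝ} (hα : α ≠ 0) {u v : ℝ → ℝ} (h : u =ᵐ[volume.restrict (Icc 0 b)] v) :
    EqOn (RL α u) (RL α v) (Icc 0 b) := by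
  intro t ht
  simp only [RL, if_neg hα]
  rw [ii_congr h ht]

lemma RL_one (u : ℝ → ℝ) : RL 1 u = J u := by
  ext t
  simp [RL, J]

lemma ae_of_eqOn {b : ℝ} {u v : ℝ → ℝ} (h : EqOn u v (Icc 0 b)) :
    u =ᵐ[volume.restrict (Icc 0 b)] v :=
  (ae_restrict_iff' measurableSet_Icc).2 (Eventually.of_forall h)

lemma RL_nat {b : ℝ} (hb : 0 < b) {u : ℝ → ℝ} (hu : IntegrableOn u (Icc 0 b)) (n : ℕ) :
    RL ((n : ℝ) + 1) u =ᵐ[volume.restrict (Icc 0 b)] J^[n + 1] u := by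
  induction n with
  | zero => simp [RL_one]
  | succ n ih =>
    have h1 := RL_semigroup (α := (n : ℝ) + 1) (β := 1) hb (by positivity) one_pos hu
    have h2 := ae_of_eqOn (RL_congr one_ne_zero ih)
    rw [Function.iterate_succ_apply', ← RL_one]
    push_cast
    exact h1.symm.trans h2

lemma J_cont {b : ℝ} (hb : 0 < b) {u : ℝ → ℝ} (hu : IntegrableOn u (Icc 0 b)) :
    ContinuousOn (J u) (Icc 0 b) := by
  have := intervalIntegral.continuousOn_primitive_interval (f := u) (μ := volume) (a := 0) (b := b)
    (by rwa [uIcc_of_le hb.le])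
  rwa [uIcc_of_le hb.le] at this

lemma J_deriv {b : ℝ} {u : ℝ → ℝ} (hu : ContinuousOn u (Icc 0 b)) {t : ℝ}
    (ht : t ∈ Icc 0 b) : HasDerivWithinAt (J u) (u t) (Icc 0 b) t := by
  have : Fact (t ∈ Icc 0 b) := ⟨ht⟩
  refine intervalIntegral.integral_hasDerivWithinAt_right (s := Icc 0 b) (t := Icc 0 b) ?_ ?_ (hu t ht)
  · apply ContinuousOn.intervalIntegrable
    rw [uIcc_of_le ht.1]
    exact hu.mono (Icc_subset_Icc_right ht.2)
  · exact hu.stronglyMeasurableAtFilter_nhdsWithin measurableSet_Icc t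

lemma J_zero (u : ℝ → ℝ) : J u 0 = 0 := by simp [J]

lemma J_inj {b : ℝ} (hb : 0 < b) {u v : ℝ → ℝ} (hu : IntegrableOn u (Icc 0 b))
    (hv : IntegrableOn v (Icc 0 b)) (h : J u =ᵐ[volume.restrict (Icc 0 b)] J v) :
    u =ᵐ[volume.restrict (Icc 0 b)] v := by
  have he : EqOn (J u) (J v) (Icc 0 b) :=
    Measure.eqOn_of_ae_eq h (J_cont hb hu) (J_cont hb hv)
      (by rw [interior_Icc, closure_Ioo hb.ne])
  have hu' := (intervalIntegrable_iff_integrableOn_Icc_of_le hb.le).2 hu |>.ae_hasDerivAt_integral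
  have hv' := (intervalIntegrable_iff_integrableOn_Icc_of_le hb.le).2 hv |>.ae_hasDerivAt_integral
  rw [EventuallyEq, ae_restrict_iff' measurableSet_Icc]
  rw [uIcc_of_le hb.le] at hu' hv'
  filter_upwards [hu', hv'] with t h1 h2 ht
  have z : (0:ℝ) ∈ Icc 0 b := ⟨le_rfl, hb.le⟩
  have d1 := (h1 ht 0 z).hasDerivWithinAt (s := Icc 0 b)
  have d2 := (h2 ht 0 z).hasDerivWithinAt (s := Icc 0 b)
  have d3 := d2.congr (f₁ := J u) he (he ht)
  exact (uniqueDiffOn_Icc hb t ht).eq_deriv _ d1 d3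

lemma Jn_cont {b : ℝ} (hb : 0 < b) {u : ℝ → ℝ} (hu : IntegrableOn u (Icc 0 b)) (n : ℕ) :
    ContinuousOn (J^[n + 1] u) (Icc 0 b) := by
  induction n with
  | zero => exact J_cont hb hu
  | succ n ih =>
    rw [Function.iterate_succ_apply']
    exact J_cont hb (ih.integrableOn_Icc)

lemma Jn_props {b : ℝ} (hb : 0 < b) {u : ℝ → ℝ} (hu : IntegrableOn u (Icc 0 b)) (n : ℕ) :
    ContDiffOn ℝ (n : ℕ) (J^[n + 1] u) (Icc 0 b) ∧
    EqOn (iteratedDerivWithin n (J^[n + 1] u) (Icc 0 b)) (J u) (Icc 0 b) ∧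
    ∀ s < n + 1, iteratedDerivWithin s (J^[n + 1] u) (Icc 0 b) 0 = 0 := by
  have z : (0:ℝ) ∈ Icc 0 b := ⟨le_rfl, hb.le⟩
  induction n with
  | zero =>
    refine ⟨?_, ?_, ?_⟩
    · simpa using J_cont hb hu
    · intro t ht
      simp
    · intro s hs
      obtain rfl : s = 0 := by omega
      simp [J_zero]
  | succ n ih =>
    obtain ⟨i1, i2, i3⟩ := ih
    have hd : EqOn (derivWithin (J^[n + 1 + 1] u) (Icc 0 b)) (J^[n + 1] u) (Icc 0 b) := by
      intro t ht
      rw [Function.iterate_succ_apply' J (n + 1)]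
      exact (J_deriv (Jn_cont hb hu n) ht).derivWithin (uniqueDiffOn_Icc hb t ht)
    refine ⟨?_, ?_, ?_⟩
    · push_cast
      rw [contDiffOn_succ_iff_derivWithin (uniqueDiffOn_Icc hb)]
      refine ⟨?_, by simp, i1.congr hd⟩
      intro t ht
      rw [Function.iterate_succ_apply' J (n + 1)]
      exact (J_deriv (Jn_cont hb hu n) ht).differentiableWithinAt
    · rw [iteratedDerivWithin_succ']
      exact (iteratedDerivWithin_congr hd).trans i2
    · intro s hs
      cases s with
      | zero =>
        rw [iteratedDerivWithin_zero, Function.iterate_succ_apply', J_zero]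
      | succ s =>
        rw [iteratedDerivWithin_succ', iteratedDerivWithin_congr hd z]
        exact i3 s (by omega)

lemma eq_Jn {b : ℝ} (hb : 0 < b) {u : ℝ → ℝ} (n : ℕ) :
    ∀ g : ℝ → ℝ, ContDiffOn ℝ (n : ℕ) g (Icc 0 b) →
    EqOn (iteratedDerivWithin n g (Icc 0 b)) (J u) (Icc 0 b) →
    (∀ s < n + 1, iteratedDerivWithin s g (Icc 0 b) 0 = 0) →
    EqOn g (J^[n + 1] u) (Icc 0 b) := by
  induction n with
  | zero =>
    intro g _ h _
    simpa using h
  | succ n ih =>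
    intro g hg h h0
    push_cast at hg
    rw [contDiffOn_succ_iff_derivWithin (uniqueDiffOn_Icc hb)] at hg
    obtain ⟨g1, -, g2⟩ := hg
    rw [iteratedDerivWithin_succ'] at h
    have e := ih (derivWithin g (Icc 0 b)) g2 h (fun s hs => by
      rw [← iteratedDerivWithin_succ']
      exact h0 (s + 1) (by omega))
    intro t ht
    have g00 : g 0 = 0 := by simpa using h0 0 (by omega)
    have hsub : Icc 0 t ⊆ Icc 0 b := Icc_subset_Icc_right ht.2
    have f1 : ∫ y in (0:ℝ)..t, derivWithin g (Icc 0 b) y = g t - g 0 := by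
      apply intervalIntegral.integral_eq_sub_of_hasDerivAt_of_le ht.1
      · exact g1.continuousOn.mono hsub
      · intro x hx
        have hx' : x ∈ Icc 0 b := hsub ⟨hx.1.le, hx.2.le⟩
        exact (g1 x hx').hasDerivWithinAt.hasDerivAt (Icc_mem_nhds hx.1 (hx.2.trans_le ht.2))
      · apply ContinuousOn.intervalIntegrable
        rw [uIcc_of_le ht.1]
        exact g2.continuousOn.mono hsub
    rw [g00, sub_zero] at f1
    rw [← f1, Function.iterate_succ_apply']
    apply intervalIntegral.integral_congr
    rw [uIcc_of_le ht.1]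
    exact e.mono hsub

end RLaux

/-- `f ∈ I^α(L¹[0,b])` if and only if `f ∈ X_α` and all the derivatives
`D^s(I^{⌈α⌉-α} f)(0)`, `s = 0, …, ⌈α⌉-1` (computed on the `AC^{⌈α⌉}` representative
of `I^{⌈α⌉-α} f`), vanish. -/
theorem mem_range_RL_iff (b : ℝ) (hb : 0 < b) (α : ℝ) (hα : 0 < α) (f : ℝ → ℝ)
    (hf : IntegrableOn f (Set.Icc 0 b) volume) :
    (∃ g : ℝ → ℝ, IntegrableOn g (Set.Icc 0 b) volume ∧
        f =ᵐ[volume.restrict (Set.Icc 0 b)] RL α g) ↔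
      (MemX b α f ∧ ∀ g : ℝ → ℝ,
        g =ᵐ[volume.restrict (Set.Icc 0 b)] RL ((⌈α⌉₊ : ℝ) - α) f →
        MemACn b ⌈α⌉₊ g →
        ∀ s < ⌈α⌉₊, iteratedDerivWithin s g (Set.Icc 0 b) 0 = 0) := by
  obtain ⟨m, hm⟩ : ∃ m : ℕ, ⌈α⌉₊ = m + 1 :=
    Nat.exists_eq_succ_of_ne_zero (Nat.ceil_pos.2 hα).ne'
  have hle : α ≤ (⌈α⌉₊ : ℝ) := Nat.le_ceil α
  have hlt : (⌈α⌉₊ : ℝ) < α + 1 := Nat.ceil_lt_add_one hα.le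
  have z : (0:ℝ) ∈ Icc 0 b := ⟨le_rfl, hb.le⟩
  rw [MemX, hm]
  rw [hm] at hle hlt
  obtain ⟨β, hβ⟩ : ∃ β : ℝ, β = ((m + 1 : ℕ) : ℝ) - α := ⟨_, rfl⟩
  rw [← hβ]
  have hβ0 : 0 ≤ β := by linarith
  have hβ1 : β < 1 := by linarith
  have hsum : α + β = (m : ℝ) + 1 := by rw [hβ]; push_cast; ring
  -- key composition identity
  have comp : ∀ u : ℝ → ℝ, IntegrableOn u (Icc 0 b) →
      RL β (RL α u) =ᵐ[volume.restrict (Icc 0 b)] RLaux.J^[m + 1] u := by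
    intro u hu
    refine EventuallyEq.trans ?_ (RLaux.RL_nat hb hu m)
    rw [← hsum]
    rcases hβ0.eq_or_lt with h | h
    · rw [← h, add_zero]
      exact Eventually.of_forall fun t => by simp [RL]
    · exact RLaux.RL_semigroup hb hα h hu
  have congrβ : ∀ u v : ℝ → ℝ, u =ᵐ[volume.restrict (Icc 0 b)] v →
      RL β u =ᵐ[volume.restrict (Icc 0 b)] RL β v := by
    intro u v huv
    rcases hβ0.eq_or_lt with h | h
    · filter_upwards [huv] with t ht
      simp [RL, ← h, ht]
    · exact RLaux.ae_of_eqOn (RLaux.RL_congr h.ne' huv)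
  constructor
  · rintro ⟨g, hg, hfg⟩
    have hG : RL β f =ᵐ[volume.restrict (Icc 0 b)] RLaux.J^[m + 1] g :=
      (congrβ _ _ hfg).trans (comp g hg)
    obtain ⟨p1, p2, p3⟩ := RLaux.Jn_props hb hg m
    refine ⟨⟨hf, fun _ => ⟨RLaux.J^[m + 1] g, hG.symm, ?_, g, hg, ?_⟩⟩, ?_⟩
    · simpa using p1
    · intro t ht
      simp only [Nat.add_sub_cancel]
      rw [p2 ht, p2 z, RLaux.J_zero, zero_add]
      rfl
    · intro k hk hkac s hs
      have he : EqOn k (RLaux.J^[m + 1] g) (Icc 0 b) :=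
        Measure.eqOn_of_ae_eq (hk.trans hG) hkac.1.continuousOn (RLaux.Jn_cont hb hg m)
          (by rw [interior_Icc, closure_Ioo hb.ne])
      rw [iteratedDerivWithin_congr he z]
      exact p3 s hs
  · rintro ⟨⟨-, hX⟩, h0⟩
    obtain ⟨g, hgf, hgac⟩ := hX hα.ne'
    have h0' := h0 g hgf hgac
    obtain ⟨c1, φ, hφ, c2⟩ := hgac
    simp only [Nat.add_sub_cancel] at c1 c2
    refine ⟨φ, hφ, ?_⟩
    have hgJ : EqOn g (RLaux.J^[m + 1] φ) (Icc 0 b) := by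
      refine RLaux.eq_Jn hb m g c1 ?_ h0'
      intro t ht
      rw [c2 t ht, h0' m (by omega), zero_add]
      rfl
    have hRφ := RLaux.RL_int hb hα hφ
    have e1 : RL β f =ᵐ[volume.restrict (Icc 0 b)] RL β (RL α φ) :=
      hgf.symm.trans ((RLaux.ae_of_eqOn hgJ).trans (comp φ hφ).symm)
    rcases hβ0.eq_or_lt with h | h
    · filter_upwards [e1] with t ht
      simpa [RL, ← h] using ht
    · have hγ : 0 < 1 - β := by linarith
      apply RLaux.J_inj hb hf hRφ
      have e2 := RLaux.ae_of_eqOn (RLaux.RL_congr hγ.ne' e1)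
      have s1 := RLaux.RL_semigroup hb h hγ hf
      have s2 := RLaux.RL_semigroup hb h hγ hRφ
      rw [add_sub_cancel, RLaux.RL_one] at s1 s2
      exact s1.symm.trans (e2.trans s2)
end
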